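/- There exists a sequence (p_k)_{k∈ℤ} with 1/(1+e) < p_k < e/(1+e) for all k, such that, letting P = ∏_{k∈ℤ} P_k be the product measure on 𝕏 = {0,1}^ℤ with P_k({1}) = p_k, the left shift T is nonsingular with respect to P, and for every real λ > 0 the number λ belongs to the ratio set R(T,P); in particular T admits no σ-finite T-invariant measure equivalent to P (T is of type III). -/

import Mathlib

open MeasureTheory Filter Topology

noncomputable section

/-- The sequence space `{0,1}^ℤ`, with `true` playing the role of `1`. -/
abbrev Xspace := ℤ → Bool

/-- The left shift `(Tw)_i = w_{i+1}`. -/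
def shiftT (w : Xspace) : Xspace := fun i => w (i + 1)

/-- The inverse of the left shift, so that `P ∘ T = Measure.map shiftInv P`. -/
def shiftInv (w : Xspace) : Xspace := fun i => w (i - 1)

/-- `coordWt p b` is `P_k({b})` when `P_k({0}) = p`. -/
def coordWt (p : ℝ) (b : Bool) : ℝ := if b then 1 - p else p

/-- The set `A_t = {∏_{u=1}^t λ_u^{x_u} : x_u ∈ ℤ, |x_u| ≤ n_u}`. -/
def Aset (lam : ℕ → ℝ) (nn : ℕ → ℕ) (t : ℕ) : Set ℝ :=
  {x | ∃ c : ℕ → ℤ, (∀ u, |c u| ≤ (nn u : ℤ)) ∧ x = ∏ u ∈ Finset.Icc 1 t, lam u ^ c u}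

/-- The data of Kosloff's inductive construction: a summable sequence `ε_t > 0`,
`M_0 = 1`, `λ_t = exp(2^{-k_t})` with `k_t = ⌊log₂(M_{t-1}/ε_t)⌋ + 1`,
`n_t` a positive integer satisfying Property *, `N_t = M_{t-1} + n_t`,
`m_t = N_t (2 + 2^{3N_t})`, `M_t = N_t + m_t`. -/
structure KosloffData where
  eps : ℕ → ℝ
  lam : ℕ → ℝ
  nn : ℕ → ℕ
  M : ℕ → ℕ
  N : ℕ → ℕ
  m : ℕ → ℕ
  eps_pos : ∀ t, 1 ≤ t → 0 < eps t
  eps_summable : Summable eps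
  M_zero : M 0 = 1
  lam_def : ∀ t, 1 ≤ t →
    lam t = Real.exp ((2 : ℝ) ^ (-(⌊Real.logb 2 ((M (t - 1) : ℝ) / eps t)⌋ + 1)))
  nn_pos : ∀ t, 1 ≤ t → 0 < nn t
  prop_star : ∀ t, 1 ≤ t → ∀ a ∈ Aset lam nn (t - 1), a ^ 2 ≤ lam t ^ ((nn t : ℝ) / 4)
  N_def : ∀ t, 1 ≤ t → N t = M (t - 1) + nn t
  m_def : ∀ t, 1 ≤ t → m t = N t * (2 + 2 ^ (3 * N t))
  M_def : ∀ t, 1 ≤ t → M t = N t + m t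

/-- `P` is the product measure `∏_k P_k` of Kosloff's construction, where `p k = P_k({0})`:
`p k = 1/2` for `k ≥ 0`, `p k = 1/(1+λ_t)` for `-N_t < k ≤ -M_{t-1}`, and `p k = 1/2`
for `-M_t < k ≤ -N_t`; cylinders get product mass. -/
def IsKosloffMeasure (D : KosloffData) (p : ℤ → ℝ) (P : Measure Xspace) : Prop :=
  IsProbabilityMeasure P ∧
  (∀ k : ℤ, 0 ≤ k → p k = 1 / 2) ∧
  (∀ t : ℕ, 1 ≤ t → ∀ k : ℤ, -(D.N t : ℤ) < k → k ≤ -(D.M (t - 1) : ℤ) →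
      p k = 1 / (1 + D.lam t)) ∧
  (∀ t : ℕ, 1 ≤ t → ∀ k : ℤ, -(D.M t : ℤ) < k → k ≤ -(D.N t : ℤ) → p k = 1 / 2) ∧
  (∀ k l : ℤ, ∀ b : ℤ → Bool,
    P {w : Xspace | ∀ i ∈ Finset.Icc k l, w i = b i}
      = ∏ i ∈ Finset.Icc k l, ENNReal.ofReal (coordWt (p i) (b i)))

/-- The Radon–Nikodym derivative `(Tⁿ)' = d(P∘Tⁿ)/dP`. -/
def rnD (P : Measure Xspace) (n : ℕ) : Xspace → ENNReal :=
  Measure.rnDeriv (Measure.map (shiftInv^[n]) P) P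

/-- `T` is nonsingular: `P∘T` and `P` are mutually absolutely continuous. -/
def ShiftNonsingular (P : Measure Xspace) : Prop :=
  Measure.map shiftInv P ≪ P ∧ P ≪ Measure.map shiftInv P

/-- The ratio set `R(T,P)` of the shift. -/
def ratioSet (P : Measure Xspace) : Set ℝ :=
  {a | 0 ≤ a ∧ ∀ A : Set Xspace, MeasurableSet A → 0 < P A → ∀ ε : ℝ, 0 < ε → ∃ n : ℕ,
      0 < P (A ∩ shiftT^[n] ⁻¹' A ∩ {w | |(rnD P n w).toReal - a| ≤ ε})}

/-- `t(n) = min {t ≥ 1 : n < N_t}`. -/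
def tOf (D : KosloffData) (n : ℕ) : ℕ := sInf {t : ℕ | 1 ≤ t ∧ n < D.N t}

/-- `Υ_u(w) = ∑_{k=-N_u+1}^{-M_{u-1}} w_k`. -/
def Ups (D : KosloffData) (u : ℕ) (w : Xspace) : ℤ :=
  ∑ k ∈ Finset.Icc (-(D.N u : ℤ) + 1) (-(D.M (u - 1) : ℤ)), (if w k then 1 else 0)

/-- `f_t(w) = ∏_{u=1}^t λ_u^{Υ_u(w)}`. -/
def fT (D : KosloffData) (t : ℕ) (w : Xspace) : ℝ :=
  ∏ u ∈ Finset.Icc 1 t, D.lam u ^ Ups D u w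

/-- The ratio `P_{k-n}({w_k}) / P_k({w_k})`. -/
def rr (p : ℤ → ℝ) (n : ℕ) (w : Xspace) (k : ℤ) : ℝ :=
  coordWt (p (k - n)) (w k) / coordWt (p k) (w k)

/-- A general product measure on `{0,1}^ℤ` with `q k = P_k({1})`. -/
def IsProductMeasure (q : ℤ → ℝ) (P : Measure Xspace) : Prop :=
  IsProbabilityMeasure P ∧
  ∀ k l : ℤ, ∀ b : ℤ → Bool,
    P {w : Xspace | ∀ i ∈ Finset.Icc k l, w i = b i}
      = ∏ i ∈ Finset.Icc k l, ENNReal.ofReal (if b i then q i else 1 - q i)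

/-!
Let the coins be independent, fair on the nonnegative coordinates, and on the negative ones let
the log-odds `θ k` decay to `0` as `k → -∞`, being constant on very long stretches.

If `w` shows the pattern `u` on `[-N, N]` and `Tⁿ w` shows `v` there, then
`log d(P ∘ Tⁿ)/dP (w)` is `log (P [v] / P [u])`, where `[u]`, `[v]` are the two cylinders, up to
the error `2 n θ (-(N + 1))`: by monotonicity the coordinates left of the window contribute a
telescoping sum. In particular the shift is nonsingular.

A set `A` of positive measure almost fills some set depending on finitely many coordinates. The
next long constant stretch of `θ` contains with probability at least `1 / 2` a constant block of
prescribed length `l`; switching that block pairs patterns `u` and `v` with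
`log (P [v] / P [u]) = l θ`, and by averaging `A` almost fills both cylinders of some pair. The
length `l` is chosen so that `l θ` is close to `log λ`. Since the coins on the right are fair, `v`
follows `u` within a time that depends only on `N` and is short compared with `1 / θ (-(N + 1))`,
and following the first returns shows that some transition from `A ∩ [u]` to `A ∩ [v]` has
positive measure. So `λ` belongs to the ratio set.
-/

open scoped Function

section Cylinders

variable {ι α : Type*}

/-- The set `s` is determined by the coordinates in `F`. -/
def DeterminedBy (F : Finset ι) (s : Set (ι → α)) : Prop := DependsOn (· ∈ s) (F : Set ι)

/-- The cylinder over `F` of all sequences agreeing with `b` on `F`. -/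
def cyl (F : Finset ι) (b : ι → α) : Set (ι → α) := {w | ∀ i ∈ F, w i = b i}

variable {F G : Finset ι} {s t : Set (ι → α)}

lemma cyl_eq_restrict_preimage (F : Finset ι) (b : ι → α) :
    cyl F b = (F.restrict : (ι → α) → F → α) ⁻¹' {F.restrict b} := by
  ext w
  simp [cyl, funext_iff]

lemma disjoint_cyl {u v : ι → α} {i : ι} (hi : i ∈ F) (h : u i ≠ v i) :
    Disjoint (cyl F u) (cyl F v) :=
  Set.disjoint_left.2 fun _ hu hv => h ((hu i hi).symm.trans (hv i hi))

namespace DeterminedBy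

lemma mem_iff (hs : DeterminedBy F s) {x y : ι → α} (h : ∀ i ∈ F, x i = y i) : x ∈ s ↔ y ∈ s :=
  (hs h).to_iff

lemma of_forall_mem_imp (h : ∀ x y, (∀ i ∈ F, x i = y i) → x ∈ s → y ∈ s) : DeterminedBy F s :=
  fun x y hxy => propext ⟨h x y hxy, h y x fun i hi => (hxy i hi).symm⟩

lemma mono (hs : DeterminedBy F s) (h : F ⊆ G) : DeterminedBy G s :=
  fun _ _ hxy => hs fun i hi => hxy i (h hi)

lemma inter (hs : DeterminedBy F s) (ht : DeterminedBy F t) : DeterminedBy F (s ∩ t) :=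
  fun _ _ hxy => propext (and_congr (hs.mem_iff hxy) (ht.mem_iff hxy))

lemma union (hs : DeterminedBy F s) (ht : DeterminedBy F t) : DeterminedBy F (s ∪ t) :=
  fun _ _ hxy => propext (or_congr (hs.mem_iff hxy) (ht.mem_iff hxy))

lemma eq_restrict_preimage (hs : DeterminedBy F s) : s = F.restrict ⁻¹' (F.restrict '' s) := by
  refine (Set.subset_preimage_image _ _).antisymm ?_
  rintro w ⟨b, hb, hbw⟩
  exact (hs.mem_iff fun i hi => congrFun hbw ⟨i, hi⟩).1 hb

end DeterminedBy

lemma determinedBy_cyl (F : Finset ι) (b : ι → α) : DeterminedBy F (cyl F b) :=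
  .of_forall_mem_imp fun _ _ hxy hx i hi => (hxy i hi).symm.trans (hx i hi)

variable [MeasurableSpace α]

lemma exists_determinedBy_symmDiff_lt (μ : Measure (ι → α)) [IsFiniteMeasure μ] {A : Set (ι → α)}
    (hA : MeasurableSet A) {ε : ℝ} (hε : 0 < ε) :
    ∃ F C, DeterminedBy F C ∧ μ.real (symmDiff A C) < ε := by
  have dense := Measure.MeasureDense.of_generateFrom_isSetAlgebra_finite μ
    (isSetAlgebra_measurableCylinders (α := fun _ : ι => α))
    (generateFrom_measurableCylinders (α := fun _ : ι => α)).symm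
  obtain ⟨C, hC, hlt⟩ := dense.approx A hA (measure_ne_top μ A) ε hε
  obtain ⟨F, S, -, rfl⟩ := (mem_measurableCylinders C).1 hC
  refine ⟨F, _, .of_forall_mem_imp fun x y hxy hx => ?_, ENNReal.toReal_lt_of_lt_ofReal hlt⟩
  rwa [mem_cylinder, ← show F.restrict x = F.restrict y from funext fun i => hxy i i.2]

lemma exists_determinedBy_diff_lt (μ : Measure (ι → α)) [IsFiniteMeasure μ] {A : Set (ι → α)}
    (hA : MeasurableSet A) (hpos : 0 < μ A) {δ : ℝ} (hδ : 0 < δ) :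
    ∃ F C, DeterminedBy F C ∧ μ.real (C \ A) < δ * μ.real C := by
  have hpos' : 0 < μ.real A := ENNReal.toReal_pos hpos.ne' (measure_ne_top μ A)
  set ε := δ / (1 + δ) * μ.real A with hε
  obtain ⟨F, C, hC, hlt⟩ := exists_determinedBy_symmDiff_lt μ hA (ε := ε) (by positivity)
  have diff_le : μ.real (C \ A) ≤ μ.real (symmDiff A C) :=
    measureReal_mono Set.subset_union_right
  have le_add : μ.real A ≤ μ.real C + μ.real (symmDiff A C) :=
    (measureReal_mono (by grind)).trans (measureReal_union_le _ _)
  have key : ε = δ * (μ.real A - ε) := by rw [hε]; field_simp; ring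
  exact ⟨F, C, hC, by nlinarith⟩

variable [Finite α] [MeasurableSingletonClass α]

lemma DeterminedBy.measurableSet (hs : DeterminedBy F s) : MeasurableSet s := by
  rw [hs.eq_restrict_preimage]
  exact F.measurable_restrict (Set.toFinite _).measurableSet

lemma measurableSet_cyl (F : Finset ι) (b : ι → α) : MeasurableSet (cyl F b) :=
  (determinedBy_cyl F b).measurableSet

lemma DeterminedBy.measure_le_of_cyl_le (hs : DeterminedBy F s) {μ ν : Measure (ι → α)}
    (h : ∀ b ∈ s, μ (cyl F b) ≤ ν (cyl F b)) : μ s ≤ ν s := by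
  have measure_eq_sum (ρ : Measure (ι → α)) :
      ∑ x ∈ (Set.toFinite (F.restrict '' s)).toFinset,
        ρ ((F.restrict : (ι → α) → F → α) ⁻¹' {x}) = ρ s := by
    rw [sum_measure_preimage_singleton, Set.Finite.coe_toFinset, ← hs.eq_restrict_preimage]
    exact fun x _ => F.measurable_restrict (.singleton x)
  rw [← measure_eq_sum μ, ← measure_eq_sum ν]
  refine Finset.sum_le_sum fun x hx => ?_
  obtain ⟨b, hb, rfl⟩ := (Set.Finite.mem_toFinset _).1 hx
  simpa only [cyl_eq_restrict_preimage] using h b hb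

lemma measure_le_of_determinedBy_le {μ ν : Measure (ι → α)} [IsFiniteMeasure μ] [IsFiniteMeasure ν]
    (h : ∀ F s, DeterminedBy F s → μ s ≤ ν s) : μ ≤ ν := by
  refine Measure.le_iff.2 fun A hA => ?_
  rw [← ENNReal.toReal_le_toReal (measure_ne_top μ A) (measure_ne_top ν A)]
  refine le_of_forall_pos_le_add fun ε hε => ?_
  obtain ⟨F, C, hC, hlt⟩ := exists_determinedBy_symmDiff_lt (μ + ν) hA hε
  have approx (ρ : Measure (ι → α)) [IsFiniteMeasure ρ] :
      |ρ.real A - ρ.real C| ≤ ρ.real (symmDiff A C) :=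
    abs_measureReal_sub_le_measureReal_symmDiff hA.nullMeasurableSet
      hC.measurableSet.nullMeasurableSet
  have hle : μ.real C ≤ ν.real C := ENNReal.toReal_mono (measure_ne_top ν C) (h F C hC)
  rw [measureReal_add_apply] at hlt
  change μ.real A ≤ ν.real A + ε
  linarith [(abs_le.1 (approx μ)).2, (abs_le.1 (approx ν)).1]

lemma DeterminedBy.restrict_le_of_cyl_le (hs : DeterminedBy F s) {μ ν : Measure (ι → α)}
    [IsFiniteMeasure μ] [IsFiniteMeasure ν]
    (h : ∀ G, F ⊆ G → ∀ b ∈ s, μ (cyl G b) ≤ ν (cyl G b)) :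
    μ.restrict s ≤ ν.restrict s := by
  classical
  refine measure_le_of_determinedBy_le fun H t ht => ?_
  rw [Measure.restrict_apply ht.measurableSet, Measure.restrict_apply ht.measurableSet]
  have hdet : DeterminedBy (F ∪ H) (t ∩ s) :=
    (ht.mono Finset.subset_union_right).inter (hs.mono Finset.subset_union_left)
  exact hdet.measure_le_of_cyl_le fun b hb => h _ Finset.subset_union_left b hb.2

lemma measure_infinitePi_inter_of_disjoint (μ : ι → Measure α)
    [∀ i, IsProbabilityMeasure (μ i)] (hFG : Disjoint F G)
    (hs : DeterminedBy F s) (ht : DeterminedBy G t) :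
    Measure.infinitePi μ (s ∩ t) = Measure.infinitePi μ s * Measure.infinitePi μ t := by
  have indep : ProbabilityTheory.iIndepFun (fun i (w : ι → α) => w i) (Measure.infinitePi μ) :=
    ProbabilityTheory.iIndepFun_infinitePi (X := fun _ => id) fun _ => measurable_id
  have hfin := indep.indepFun_finset F G hFG measurable_pi_apply
  rw [hs.eq_restrict_preimage, ht.eq_restrict_preimage]
  exact ProbabilityTheory.indepFun_iff_measure_inter_preimage_eq_mul.1 hfin _ _
    (Set.toFinite _).measurableSet (Set.toFinite _).measurableSet

end Cylinders

section FirstPassage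

variable {Ω : Type*}

/-- The points of `B` that lie in none of the sets `E 0, …, E (j - 1)`: for trials `E i`, the event
that the first success does not occur before trial `j`. -/
def avoiding (B : Set Ω) (E : ℕ → Set Ω) (j : ℕ) : Set Ω := B \ ⋃ i < j, E i

lemma avoiding_zero (B : Set Ω) (E : ℕ → Set Ω) : avoiding B E 0 = B := by simp [avoiding]

lemma avoiding_succ (B : Set Ω) (E : ℕ → Set Ω) (j : ℕ) :
    avoiding B E (j + 1) = avoiding B E j \ (avoiding B E j ∩ E j) := by
  simp only [avoiding, Set.biUnion_lt_succ]
  grind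

lemma notMem_of_mem_avoiding {B : Set Ω} {E : ℕ → Set Ω} {i j : ℕ} {x : Ω}
    (hx : x ∈ avoiding B E j) (hij : i < j) : x ∉ E i :=
  fun hi => hx.2 (Set.mem_biUnion hij hi)

lemma pairwise_disjoint_avoiding_inter (B : Set Ω) (E : ℕ → Set Ω) :
    Pairwise (Disjoint on fun j => avoiding B E j ∩ E j) :=
  (pairwise_disjoint_on _).2 fun _ _ hij =>
    Set.disjoint_left.2 fun _ hi hj => notMem_of_mem_avoiding hj.1 hij hi.2

lemma DeterminedBy.avoiding {ι α : Type*} {F : Finset ι} {B : Set (ι → α)} {E : ℕ → Set (ι → α)}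
    {j : ℕ} (hB : DeterminedBy F B) (hE : ∀ i < j, DeterminedBy F (E i)) :
    DeterminedBy F (avoiding B E j) := by
  refine .of_forall_mem_imp fun x y hxy hx => ⟨(hB.mem_iff hxy).1 hx.1, fun hy => ?_⟩
  obtain ⟨i, hij, hyi⟩ := Set.mem_iUnion₂.1 hy
  exact notMem_of_mem_avoiding hx hij (((hE i hij).mem_iff hxy).2 hyi)

variable [MeasurableSpace Ω] {μ : Measure Ω} {B : Set Ω} {E H : ℕ → Set Ω}

lemma measurableSet_avoiding (hB : MeasurableSet B) (hE : ∀ j, MeasurableSet (E j)) (j : ℕ) :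
    MeasurableSet (avoiding B E j) :=
  hB.diff (.biUnion (Set.to_countable _) fun i _ => hE i)

variable [IsFiniteMeasure μ]

lemma measureReal_avoiding (hB : MeasurableSet B) (hE : ∀ j, MeasurableSet (E j)) {q : ℝ} {J : ℕ}
    (hq : ∀ j < J, μ.real (avoiding B E j ∩ E j) = μ.real (avoiding B E j) * q) :
    ∀ j ≤ J, μ.real (avoiding B E j) = μ.real B * (1 - q) ^ j
  | 0, _ => by simp [avoiding_zero]
  | j + 1, hj => by
    rw [avoiding_succ, measureReal_sdiff Set.inter_subset_left
      ((measurableSet_avoiding hB hE j).inter (hE j)), hq j hj,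
      measureReal_avoiding hB hE hq j (Nat.le_of_succ_le hj)]
    ring

lemma mul_measureReal_le_sum_avoiding_inter (hB : MeasurableSet B) (hE : ∀ j, MeasurableSet (E j))
    {q r : ℝ} {J : ℕ}
    (hq : ∀ j < J, μ.real (avoiding B E j ∩ E j) = μ.real (avoiding B E j) * q)
    (hr : ∀ j < J, μ.real (avoiding B E j ∩ H j) = μ.real (avoiding B E j) * r)
    (hr0 : 0 ≤ r) (hJ : (1 - q) ^ J ≤ 1 / 2) :
    r * μ.real B ≤ 2 * q * ∑ j ∈ Finset.range J, μ.real (avoiding B E j ∩ H j) := by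
  have sum_eq : ∑ j ∈ Finset.range J, μ.real (avoiding B E j ∩ H j) =
      r * μ.real B * ∑ j ∈ Finset.range J, (1 - q) ^ j := by
    rw [Finset.mul_sum]
    refine Finset.sum_congr rfl fun j hj => ?_
    have hj := Finset.mem_range.1 hj
    rw [hr j hj, measureReal_avoiding hB hE hq j hj.le]
    ring
  have geom := mul_neg_geom_sum (1 - q) J
  have hB0 : 0 ≤ r * μ.real B := by positivity
  rw [sum_eq]
  calc r * μ.real B ≤ 2 * (r * μ.real B * (1 - (1 - q) ^ J)) := by nlinarith
    _ = _ := by rw [← geom]; ring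

end FirstPassage

lemma one_sub_half_pow_pow_le (l : ℕ) : (1 - (1 / 2 : ℝ) ^ l) ^ 2 ^ l ≤ 1 / 2 := by
  have hpos : (0 : ℝ) < (1 / 2) ^ l := by positivity
  have bernoulli : (2 : ℝ) ≤ (1 + (1 / 2 : ℝ) ^ l) ^ 2 ^ l := by
    have h := one_add_mul_le_pow (a := (1 / 2 : ℝ) ^ l) (by linarith) (2 ^ l)
    rwa [Nat.cast_pow, ← mul_pow, Nat.cast_ofNat, mul_one_div_cancel two_ne_zero, one_pow,
      one_add_one_eq_two] at h
  have hle : (1 / 2 : ℝ) ^ l ≤ 1 := pow_le_one₀ (by norm_num) (by norm_num)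
  have prod_le : (1 - (1 / 2 : ℝ) ^ l) ^ 2 ^ l * (1 + (1 / 2 : ℝ) ^ l) ^ 2 ^ l ≤ 1 := by
    rw [← mul_pow]
    exact pow_le_one₀ (by nlinarith) (by nlinarith)
  have hnonneg : 0 ≤ (1 - (1 / 2 : ℝ) ^ l) ^ 2 ^ l := pow_nonneg (by linarith) _
  nlinarith

section FirstReturn

variable {Ω : Type*} {S S' : Ω → Ω}

/-- The points of `U` whose first visit to `U ∪ V` after time `0` under `S` is at time `j + 1` and
in `V`. -/
def firstReturn (S : Ω → Ω) (U V : Set Ω) (j : ℕ) : Set Ω :=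
  avoiding U (fun i => S^[i + 1] ⁻¹' (U ∪ V)) j ∩ S^[j + 1] ⁻¹' V

lemma firstReturn_subset (S : Ω → Ω) (U V : Set Ω) (j : ℕ) :
    firstReturn S U V j ⊆ U ∩ S^[j + 1] ⁻¹' V :=
  Set.inter_subset_inter_left _ Set.sdiff_subset

lemma pairwise_disjoint_firstReturn (S : Ω → Ω) (U V : Set Ω) :
    Pairwise (Disjoint on firstReturn S U V) :=
  (pairwise_disjoint_avoiding_inter U fun i => S^[i + 1] ⁻¹' (U ∪ V)).mono fun _ _ h =>
    h.mono (Set.inter_subset_inter_right _ (Set.preimage_mono Set.subset_union_right))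
      (Set.inter_subset_inter_right _ (Set.preimage_mono Set.subset_union_right))

-- If `S^[i+1] a = S^[j+1] b` with `i < j`, then `b` visits `a ∈ U` before its first return.
lemma pairwise_disjoint_preimage_firstReturn (hS : Function.LeftInverse S S') (U V : Set Ω) :
    Pairwise (Disjoint on fun j => S'^[j + 1] ⁻¹' firstReturn S U V j) := by
  refine (pairwise_disjoint_on _).2 fun i j hij => Set.disjoint_left.2 fun x hi hj => ?_
  obtain ⟨k, rfl⟩ := Nat.exists_eq_add_of_lt hij
  refine notMem_of_mem_avoiding hj.1 (i := k) (by omega) (Or.inl ?_)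
  have return_eq : S^[k + 1] (S'^[i + k + 1 + 1] x) = S'^[i + 1] x := by
    rw [show i + k + 1 + 1 = k + 1 + (i + 1) by omega, Function.iterate_add_apply S',
      hS.iterate (k + 1)]
  rw [return_eq]
  exact hi.1.1

variable [MeasurableSpace Ω] {μ : Measure Ω} [IsFiniteMeasure μ] {U V A : Set Ω}

lemma measurableSet_firstReturn (hS : Measurable S) (hU : MeasurableSet U) (hV : MeasurableSet V)
    (j : ℕ) : MeasurableSet (firstReturn S U V j) :=
  (measurableSet_avoiding hU (fun i => hS.iterate (i + 1) (hU.union hV)) j).inter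
    (hS.iterate (j + 1) hV)

lemma sum_firstReturn_sub_le (hS : Measurable S) (hU : MeasurableSet U) (hV : MeasurableSet V)
    (hA : MeasurableSet A) (J : ℕ) :
    ∑ j ∈ Finset.range J, μ.real (firstReturn S U V j) - μ.real (U \ A) ≤
      ∑ j ∈ Finset.range J, μ.real (firstReturn S U V j ∩ A) := by
  have hm := measurableSet_firstReturn hS hU hV
  have diff_le : ∑ j ∈ Finset.range J, μ.real (firstReturn S U V j \ A) ≤ μ.real (U \ A) := by
    rw [← measureReal_biUnion_finset
      (fun i _ j _ h => (pairwise_disjoint_firstReturn S U V h).mono Set.sdiff_subset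
        Set.sdiff_subset) fun j _ => (hm j).diff hA]
    exact measureReal_mono (Set.iUnion₂_subset fun j _ =>
      Set.sdiff_subset_sdiff_left ((firstReturn_subset S U V j).trans Set.inter_subset_left))
  rw [sub_le_iff_le_add]
  calc ∑ j ∈ Finset.range J, μ.real (firstReturn S U V j)
      = ∑ j ∈ Finset.range J, μ.real (firstReturn S U V j ∩ A)
          + ∑ j ∈ Finset.range J, μ.real (firstReturn S U V j \ A) := by
        rw [← Finset.sum_add_distrib]
        exact Finset.sum_congr rfl fun j _ => (measureReal_inter_add_sdiff hA).symm
    _ ≤ _ := by gcongr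

lemma exists_firstReturn_pos (hS : Measurable S) (hS' : Measurable S')
    (hinv : Function.LeftInverse S S') (hac : ∀ n, μ.map S'^[n] ≪ μ)
    (hU : MeasurableSet U) (hV : MeasurableSet V) (hA : MeasurableSet A) {c : ℝ} {J : ℕ}
    (hc : ∀ j < J, ∀ X ⊆ firstReturn S U V j, MeasurableSet X →
      c * μ.real X ≤ μ.real (S'^[j + 1] ⁻¹' X)) (hc0 : 0 ≤ c)
    (hlt : μ.real (V \ A) <
      c * (∑ j ∈ Finset.range J, μ.real (firstReturn S U V j) - μ.real (U \ A))) :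
    ∃ j < J, 0 < μ (A ∩ S^[j + 1] ⁻¹' A ∩ firstReturn S U V j) := by
  by_contra! hnull
  have hm := measurableSet_firstReturn hS hU hV
  set Y : ℕ → Set Ω := fun j => S'^[j + 1] ⁻¹' (firstReturn S U V j ∩ A)
  have hYm (j : ℕ) : MeasurableSet (Y j) := hS'.iterate _ ((hm j).inter hA)
  have image_subset (j : ℕ) : Y j ⊆ V := fun x hx => by
    simpa only [Set.mem_preimage, hinv.iterate (j + 1) x] using hx.1.2
  have inter_null (j : ℕ) (hj : j < J) : μ (Y j ∩ A) = 0 := by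
    have hX : MeasurableSet (A ∩ S^[j + 1] ⁻¹' A ∩ firstReturn S U V j) :=
      (hA.inter (hS.iterate _ hA)).inter (hm j)
    have h0 := hac (j + 1) (nonpos_iff_eq_zero.1 (hnull j hj))
    rw [Measure.map_apply (hS'.iterate _) hX] at h0
    refine measure_mono_null (fun x hx => ?_) h0
    have hxA : S^[j + 1] (S'^[j + 1] x) ∈ A := (hinv.iterate (j + 1) x).symm ▸ hx.2
    exact ⟨⟨hx.1.2, hxA⟩, hx.1.1⟩
  have sum_le : ∑ j ∈ Finset.range J, μ.real (Y j \ A) ≤ μ.real (V \ A) := by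
    rw [← measureReal_biUnion_finset
      (fun i _ j _ h => (pairwise_disjoint_preimage_firstReturn hinv U V h).mono
        (fun _ hx => hx.1.1) fun _ hx => hx.1.1) fun j _ => (hYm j).diff hA]
    exact measureReal_mono (Set.iUnion₂_subset fun j _ =>
      Set.sdiff_subset_sdiff_left (image_subset j))
  refine hlt.not_ge (le_trans ?_ sum_le)
  refine (mul_le_mul_of_nonneg_left (sum_firstReturn_sub_le hS hU hV hA J) hc0).trans ?_
  rw [Finset.mul_sum]
  refine Finset.sum_le_sum fun j hj => ?_
  have hj := Finset.mem_range.1 hj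
  have hY0 : μ.real (Y j ∩ A) = 0 := by rw [measureReal_def, inter_null j hj, ENNReal.toReal_zero]
  calc c * μ.real (firstReturn S U V j ∩ A) ≤ μ.real (Y j) :=
        hc j hj _ Set.inter_subset_left ((hm j).inter hA)
    _ = μ.real (Y j \ A) := by rw [← measureReal_inter_add_sdiff (s := Y j) hA, hY0, zero_add]

end FirstReturn

section Density

variable {Ω : Type*} [MeasurableSpace Ω] {μ ν : Measure Ω} [SigmaFinite ν] {D : Set Ω}

lemma rnDeriv_le_of_restrict_le {c : ENNReal} (hD : MeasurableSet D)
    (h : μ.restrict D ≤ (c • ν).restrict D) : ∀ᵐ x ∂ν, x ∈ D → μ.rnDeriv ν x ≤ c := by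
  rw [← ae_restrict_iff' hD]
  refine ae_le_of_forall_setLIntegral_le_of_sigmaFinite (Measure.measurable_rnDeriv μ ν)
    fun s hs _ => ?_
  calc ∫⁻ x in s, μ.rnDeriv ν x ∂ν.restrict D = ∫⁻ x in s ∩ D, μ.rnDeriv ν x ∂ν := by
        rw [Measure.restrict_restrict hs]
    _ ≤ μ (s ∩ D) := Measure.setLIntegral_rnDeriv_le _
    _ ≤ (c • ν) (s ∩ D) := by simpa only [Measure.restrict_apply hs] using h s
    _ = ∫⁻ _ in s, c ∂ν.restrict D := by
        rw [setLIntegral_const, Measure.restrict_apply hs, Measure.smul_apply, smul_eq_mul]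

lemma le_rnDeriv_of_restrict_le [SigmaFinite μ] {c : ENNReal} (hac : μ ≪ ν) (hD : MeasurableSet D)
    (h : (c • ν).restrict D ≤ μ.restrict D) : ∀ᵐ x ∂ν, x ∈ D → c ≤ μ.rnDeriv ν x := by
  rw [← ae_restrict_iff' hD]
  refine ae_le_of_forall_setLIntegral_le_of_sigmaFinite measurable_const fun s hs _ => ?_
  calc ∫⁻ _ in s, c ∂ν.restrict D = (c • ν) (s ∩ D) := by
        rw [setLIntegral_const, Measure.restrict_apply hs, Measure.smul_apply, smul_eq_mul]
    _ ≤ μ (s ∩ D) := by simpa only [Measure.restrict_apply hs] using h s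
    _ = ∫⁻ x in s ∩ D, μ.rnDeriv ν x ∂ν := (Measure.setLIntegral_rnDeriv hac _).symm
    _ = ∫⁻ x in s, μ.rnDeriv ν x ∂ν.restrict D := by rw [Measure.restrict_restrict hs]

lemma exists_measure_rnDeriv_preimage_Ico_pos [SigmaFinite μ] [NeZero μ] (hac : μ ≪ ν)
    {y : ENNReal} (hy : 1 < y) (hy' : y ≠ ⊤) :
    ∃ k : ℤ, 0 < μ (μ.rnDeriv ν ⁻¹' Set.Ico (y ^ k) (y ^ (k + 1))) := by
  by_contra! hnull
  have hunion : ∀ᵐ x ∂μ, x ∉ ⋃ k : ℤ, μ.rnDeriv ν ⁻¹' Set.Ico (y ^ k) (y ^ (k + 1)) :=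
    measure_eq_zero_iff_ae_notMem.1 (measure_iUnion_null fun k => nonpos_iff_eq_zero.1 (hnull k))
  refine NeZero.ne μ (ae_eq_bot.1 (eventually_false_iff_eq_bot.1 ?_))
  filter_upwards [hunion, Measure.rnDeriv_pos hac, hac.ae_le (Measure.rnDeriv_lt_top μ ν)]
    with x hx hpos hfin
  exact hx (Set.mem_iUnion.2 (ENNReal.exists_mem_Ico_zpow hpos.ne' hfin.ne hy hy'))

lemma map_apply_le_of_rnDeriv_mem_Ico [SigmaFinite μ] (hac : μ ≪ ν) {g : Ω → Ω}
    (hg : MeasurePreserving g ν ν) {y : ENNReal} (hy : y ≠ 0) (hy' : y ≠ ⊤) {k : ℤ}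
    (hD : MeasurableSet D) (hlow : ∀ x ∈ D, y ^ k ≤ μ.rnDeriv ν x)
    (hup : ∀ x ∈ g ⁻¹' D, μ.rnDeriv ν x < y ^ (k + 1)) : μ.map g D ≤ y * μ D := by
  calc μ.map g D = ∫⁻ x in g ⁻¹' D, μ.rnDeriv ν x ∂ν := by
        rw [Measure.map_apply hg.measurable hD, Measure.setLIntegral_rnDeriv hac]
    _ ≤ ∫⁻ _ in g ⁻¹' D, y ^ (k + 1) ∂ν :=
        setLIntegral_mono' (hg.measurable hD) fun x hx => (hup x hx).le
    _ = y * ∫⁻ _ in D, y ^ k ∂ν := by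
        rw [setLIntegral_const, setLIntegral_const, hg.measure_preimage hD.nullMeasurableSet,
          ENNReal.zpow_add hy hy', zpow_one]
        ring
    _ ≤ y * ∫⁻ x in D, μ.rnDeriv ν x ∂ν := by gcongr _ * ?_; exact setLIntegral_mono' hD hlow
    _ = y * μ D := by rw [Measure.setLIntegral_rnDeriv hac]

end Density

section Shift

lemma shiftT_iterate_apply (n : ℕ) (w : Xspace) (i : ℤ) : shiftT^[n] w i = w (i + n) := by
  induction n generalizing i with
  | zero => simp
  | succ n ih => rw [Function.iterate_succ_apply', shiftT, ih]; push_cast; ring_nf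

lemma shiftInv_iterate_apply (n : ℕ) (w : Xspace) (i : ℤ) : shiftInv^[n] w i = w (i - n) := by
  induction n generalizing i with
  | zero => simp
  | succ n ih => rw [Function.iterate_succ_apply', shiftInv, ih]; push_cast; ring_nf

lemma measurable_shiftT : Measurable shiftT :=
  measurable_pi_lambda _ fun i => measurable_pi_apply (i + 1)

lemma measurable_shiftInv : Measurable shiftInv :=
  measurable_pi_lambda _ fun i => measurable_pi_apply (i - 1)

lemma leftInverse_shiftT_shiftInv : Function.LeftInverse shiftT shiftInv := fun w =>
  funext fun i => congrArg w (add_sub_cancel_right i 1)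

-- If `ρ = dP/dμ` with `μ` invariant, then `d(P ∘ Tⁿ)/dP = (ρ ∘ Tⁿ) / ρ` is close to `1` wherever
-- `x` and `Tⁿ x` lie in a common level set `{yᵏ ≤ ρ < yᵏ⁺¹}`.
lemma not_exists_invariant_of_mem_ratioSet {P : Measure Xspace} [IsFiniteMeasure P] [NeZero P]
    {a : ℝ} (ha : 1 < a) (hmem : a ∈ ratioSet P) :
    ¬ ∃ μ : Measure Xspace, SigmaFinite μ ∧ μ ≪ P ∧ P ≪ μ ∧ Measure.map shiftInv μ = μ := by
  rintro ⟨μ, _, -, hPμ, hinv⟩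
  set ε := (a - 1) / 3 with hε
  set y := ENNReal.ofReal (1 + ε) with hy
  have hy1 : 1 < y := ENNReal.one_lt_ofReal.2 (by linarith)
  obtain ⟨k, hk⟩ := exists_measure_rnDeriv_preimage_Ico_pos hPμ hy1 ENNReal.ofReal_ne_top
  set A := P.rnDeriv μ ⁻¹' Set.Ico (y ^ k) (y ^ (k + 1))
  have hA : MeasurableSet A := Measure.measurable_rnDeriv P μ measurableSet_Ico
  obtain ⟨n, hn⟩ := hmem.2 A hA hk ε (by linarith)
  set X := A ∩ shiftT^[n] ⁻¹' A ∩ {w | |(rnD P n w).toReal - a| ≤ ε}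
  have hX : MeasurableSet X := by
    have : Measurable (rnD P n) := Measure.measurable_rnDeriv _ _
    exact (hA.inter (measurable_shiftT.iterate n hA)).inter
      (measurableSet_le (by fun_prop) measurable_const)
  have le_map : ENNReal.ofReal (a - ε) * P X ≤ P.map shiftInv^[n] X := by
    refine le_trans ?_ (Measure.setLIntegral_rnDeriv_le (ν := P) X)
    rw [← setLIntegral_const]
    refine setLIntegral_mono' hX fun x hx => ENNReal.ofReal_le_of_le_toReal ?_
    have hxε : |((P.map shiftInv^[n]).rnDeriv P x).toReal - a| ≤ ε := hx.2
    linarith [(abs_le.1 hxε).1]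
  have map_le : P.map shiftInv^[n] X ≤ y * P X := by
    have hmp : MeasurePreserving shiftInv μ μ := ⟨measurable_shiftInv, hinv⟩
    refine map_apply_le_of_rnDeriv_mem_Ico hPμ (hmp.iterate n) (zero_lt_one.trans hy1).ne'
      ENNReal.ofReal_ne_top hX (fun x hx => hx.1.1.1) fun x hx => ?_
    have hxA : shiftT^[n] (shiftInv^[n] x) ∈ A := hx.1.2
    rw [leftInverse_shiftT_shiftInv.iterate n] at hxA
    exact hxA.2
  have hle := (ENNReal.mul_le_mul_iff_left hn.ne' (measure_ne_top P X)).1 (le_map.trans map_le)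
  rw [hy, ENNReal.ofReal_le_ofReal_iff (by linarith)] at hle
  linarith

end Shift

section Coin

/-- The probability of the outcome `b` of a coin with log-odds `θ` in favour of `true`. -/
def coinMass (θ : ℝ) (b : Bool) : ℝ := Real.sigmoid (if b then θ else -θ)

/-- The logarithm of the density of the coin with log-odds `θ` with respect to the fair coin. -/
def logDensity (θ : ℝ) (b : Bool) : ℝ := Real.log (2 * coinMass θ b)

lemma coinMass_pos (θ : ℝ) (b : Bool) : 0 < coinMass θ b := Real.sigmoid_pos _

lemma coinMass_zero (b : Bool) : coinMass 0 b = 1 / 2 := by simp [coinMass]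

lemma coinMass_eq_ite (θ : ℝ) (b : Bool) :
    coinMass θ b = if b then Real.sigmoid θ else 1 - Real.sigmoid θ := by
  cases b <;> simp [coinMass, Real.sigmoid_neg]

lemma coinMass_true_eq (θ : ℝ) : coinMass θ true = Real.exp θ * coinMass θ false := by
  have h := Real.sigmoid_mul_rexp_neg θ
  rw [Real.exp_neg] at h
  simp only [coinMass, if_true, Bool.false_eq_true, if_false, ← h]
  field_simp

lemma exp_logDensity (θ : ℝ) (b : Bool) : Real.exp (logDensity θ b) = 2 * coinMass θ b :=
  Real.exp_log (mul_pos two_pos (coinMass_pos θ b))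

lemma logDensity_zero (b : Bool) : logDensity 0 b = 0 := by simp [logDensity, coinMass_zero]

lemma logDensity_true_sub_false (θ : ℝ) : logDensity θ true - logDensity θ false = θ := by
  have hpos := coinMass_pos θ false
  rw [logDensity, logDensity, coinMass_true_eq, ← Real.log_div (by positivity) (by positivity)]
  field_simp
  exact Real.log_exp θ

lemma log_sigmoid_sub_le {x y : ℝ} (h : x ≤ y) :
    Real.log (Real.sigmoid y) - Real.log (Real.sigmoid x) ≤ y - x := by
  have sigmoid_le : Real.sigmoid y ≤ Real.exp (y - x) * Real.sigmoid x := by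
    have hexp : Real.exp (y - x) * Real.exp (-y) = Real.exp (-x) := by
      rw [← Real.exp_add]; ring_nf
    rw [Real.sigmoid_def, Real.sigmoid_def, ← div_eq_mul_inv,
      inv_le_comm₀ (by positivity) (by positivity), inv_div, div_le_iff₀ (by positivity)]
    nlinarith [Real.one_le_exp (sub_nonneg.2 h)]
  rw [← Real.log_div (Real.sigmoid_pos y).ne' (Real.sigmoid_pos x).ne',
    Real.log_le_iff_le_exp (div_pos (Real.sigmoid_pos y) (Real.sigmoid_pos x))]
  exact (div_le_iff₀ (Real.sigmoid_pos x)).2 sigmoid_le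

lemma abs_log_sigmoid_sub_le (x y : ℝ) :
    |Real.log (Real.sigmoid x) - Real.log (Real.sigmoid y)| ≤ |x - y| := by
  wlog h : y ≤ x generalizing x y
  · rw [abs_sub_comm, abs_sub_comm x]
    exact this y x (le_of_not_ge h)
  have hmono := Real.log_le_log (Real.sigmoid_pos y) (Real.sigmoid_monotone h)
  rw [abs_of_nonneg (sub_nonneg.2 hmono), abs_of_nonneg (sub_nonneg.2 h)]
  exact log_sigmoid_sub_le h

lemma abs_logDensity_sub_le (x y : ℝ) (b : Bool) :
    |logDensity x b - logDensity y b| ≤ |x - y| := by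
  rw [logDensity, logDensity, Real.log_mul two_ne_zero (coinMass_pos x b).ne',
    Real.log_mul two_ne_zero (coinMass_pos y b).ne', add_sub_add_left_eq_sub]
  refine (abs_log_sigmoid_sub_le _ _).trans_eq ?_
  cases b
  · simp only [Bool.false_eq_true, if_false, neg_sub_neg, abs_sub_comm]
  · rfl

lemma sigmoid_mem_Ioo {θ : ℝ} (h : θ ∈ Set.Ioo (-1) 1) :
    Real.sigmoid θ ∈ Set.Ioo (1 / (1 + Real.exp 1)) (Real.exp 1 / (1 + Real.exp 1)) := by
  have sigmoid_neg_one : Real.sigmoid (-1) = 1 / (1 + Real.exp 1) := by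
    rw [Real.sigmoid_def, neg_neg, one_div]
  have sigmoid_one : Real.sigmoid 1 = Real.exp 1 / (1 + Real.exp 1) := by
    rw [← neg_neg (1 : ℝ), Real.sigmoid_neg, neg_neg, sigmoid_neg_one]
    field_simp
    ring
  rw [← sigmoid_neg_one, ← sigmoid_one]
  exact ⟨Real.sigmoid_lt h.1, Real.sigmoid_lt h.2⟩

end Coin

section CoinMeasure

/-- The law of independent coins, the `k`-th one having log-odds `θ k` in favour of `true`. -/
def coinMeasure (θ : ℤ → ℝ) : Measure Xspace :=
  Measure.infinitePi fun k =>
    ProbabilityTheory.bernoulliMeasure true false (unitInterval.sigmoid (θ k))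

instance (θ : ℤ → ℝ) : IsProbabilityMeasure (coinMeasure θ) :=
  inferInstanceAs (IsProbabilityMeasure (Measure.infinitePi _))

lemma bernoulliMeasure_sigmoid_singleton (θ : ℝ) (b : Bool) :
    ProbabilityTheory.bernoulliMeasure true false (unitInterval.sigmoid θ) {b} =
      ENNReal.ofReal (coinMass θ b) := by
  rw [← ofReal_measureReal]
  cases b <;> simp [coinMass, Real.sigmoid_neg] <;> rfl

lemma coinMeasure_cyl (θ : ℤ → ℝ) (F : Finset ℤ) (b : Xspace) :
    coinMeasure θ (cyl F b) = ∏ i ∈ F, ENNReal.ofReal (coinMass (θ i) (b i)) := by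
  have cyl_eq_pi : cyl F b = Set.pi F fun i => {b i} := by ext w; simp [cyl]
  rw [cyl_eq_pi, coinMeasure, Measure.infinitePi_pi _ fun i _ => .singleton (b i)]
  exact Finset.prod_congr rfl fun i _ => bernoulliMeasure_sigmoid_singleton _ _

lemma coinMeasure_real_cyl (θ : ℤ → ℝ) (F : Finset ℤ) (b : Xspace) :
    (coinMeasure θ).real (cyl F b) = ∏ i ∈ F, coinMass (θ i) (b i) := by
  rw [measureReal_def, coinMeasure_cyl, ENNReal.toReal_prod]
  exact Finset.prod_congr rfl fun i _ => ENNReal.toReal_ofReal (coinMass_pos _ _).le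

lemma coinMeasure_real_cyl_pos (θ : ℤ → ℝ) (F : Finset ℤ) (b : Xspace) :
    0 < (coinMeasure θ).real (cyl F b) := by
  rw [coinMeasure_real_cyl]
  exact Finset.prod_pos fun i _ => coinMass_pos _ _

lemma isProductMeasure_coinMeasure (θ : ℤ → ℝ) :
    IsProductMeasure (fun k => Real.sigmoid (θ k)) (coinMeasure θ) :=
  ⟨inferInstance, fun k l b => by
    simpa only [cyl, coinMass_eq_ite] using coinMeasure_cyl θ (.Icc k l) b⟩

lemma coinMeasure_real_inter_of_disjoint (θ : ℤ → ℝ) {F G : Finset ℤ} (hFG : Disjoint F G)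
    {s t : Set Xspace} (hs : DeterminedBy F s) (ht : DeterminedBy G t) :
    (coinMeasure θ).real (s ∩ t) = (coinMeasure θ).real s * (coinMeasure θ).real t := by
  simp only [measureReal_def, coinMeasure, measure_infinitePi_inter_of_disjoint _ hFG hs ht,
    ENNReal.toReal_mul]

lemma coinMeasure_real_cyl_eq_exp_mul (θ θ' : ℤ → ℝ) (F : Finset ℤ) (b b' : Xspace) :
    (coinMeasure θ').real (cyl F b') =
      Real.exp (∑ i ∈ F, (logDensity (θ' i) (b' i) - logDensity (θ i) (b i))) *
        (coinMeasure θ).real (cyl F b) := by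
  simp only [coinMeasure_real_cyl, Real.exp_sum, Real.exp_sub, exp_logDensity,
    ← Finset.prod_mul_distrib]
  refine Finset.prod_congr rfl fun i _ => ?_
  have := coinMass_pos (θ i) (b i)
  field_simp

lemma map_shiftInv_iterate_coinMeasure (θ : ℤ → ℝ) (n : ℕ) :
    (coinMeasure θ).map shiftInv^[n] = coinMeasure fun k => θ (k - n) := by
  refine Measure.eq_infinitePi _ fun F t ht => ?_
  rw [Measure.map_apply (measurable_shiftInv.iterate n) (.pi F.countable_toSet fun i _ => ht i)]
  have preimage_eq : shiftInv^[n] ⁻¹' Set.pi F t =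
      Set.pi (F.map (Equiv.subRight (n : ℤ)).toEmbedding) fun k => t (k + n) := by
    ext w
    simp [Set.mem_pi, shiftInv_iterate_apply]
  rw [preimage_eq, coinMeasure, Measure.infinitePi_pi _ fun i _ => ht _, Finset.prod_map]
  simp

end CoinMeasure

section Window

/-- The window `[-N, N]` of coordinates. -/
def window (N : ℕ) : Finset ℤ := Finset.Icc (-N) N

lemma mem_window {N : ℕ} {k : ℤ} : k ∈ window N ↔ -(N : ℤ) ≤ k ∧ k ≤ N := Finset.mem_Icc

lemma window_mono : Monotone window := fun _ _ h => by
  apply Finset.Icc_subset_Icc <;> omega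

lemma card_window (N : ℕ) : (window N).card = 2 * N + 1 := by
  rw [window, Int.card_Icc]
  omega

lemma exists_subset_window (F : Finset ℤ) : ∃ N, F ⊆ window N := by
  refine ⟨F.sup Int.natAbs, fun k hk => ?_⟩
  have := Finset.le_sup (f := Int.natAbs) hk
  rw [mem_window]
  omega

/-- The sequences `w` that look like `u`, and whose shift `Tⁿ w` looks like `v`, on the window
`[-N, N]`. -/
def transition (N n : ℕ) (u v : Xspace) : Set Xspace :=
  cyl (window N) u ∩ shiftT^[n] ⁻¹' cyl (window N) v

lemma shiftT_iterate_preimage_cyl (F : Finset ℤ) (n : ℕ) (v : Xspace) :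
    shiftT^[n] ⁻¹' cyl F v = cyl (F.map (Equiv.addRight (n : ℤ)).toEmbedding) (shiftInv^[n] v) := by
  ext w
  simp only [cyl, Set.mem_preimage, Set.mem_ofPred_eq, shiftT_iterate_apply, shiftInv_iterate_apply,
    Finset.forall_mem_map, Equiv.coe_toEmbedding, Equiv.coe_addRight, add_sub_cancel_right]

lemma DeterminedBy.shiftT_iterate_preimage {F : Finset ℤ} {s : Set Xspace} (hs : DeterminedBy F s)
    (n : ℕ) : DeterminedBy (F.map (Equiv.addRight (n : ℤ)).toEmbedding) (shiftT^[n] ⁻¹' s) :=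
  fun x y hxy => hs fun i hi => by
    rw [shiftT_iterate_apply, shiftT_iterate_apply]
    exact hxy _ (Finset.mem_map_of_mem _ hi)

lemma mem_map_addRight_window {N n : ℕ} {k : ℤ} :
    k ∈ (window N).map (Equiv.addRight (n : ℤ)).toEmbedding ↔ n - N ≤ k ∧ k ≤ n + N := by
  simp only [Finset.mem_map, mem_window, Equiv.coe_toEmbedding, Equiv.coe_addRight]
  exact ⟨fun ⟨i, hi, hik⟩ => by omega, fun hk => ⟨k - n, by omega, by omega⟩⟩

lemma map_addRight_window_subset (N n : ℕ) :
    (window N).map (Equiv.addRight (n : ℤ)).toEmbedding ⊆ window (N + n) := fun k hk => by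
  rw [mem_map_addRight_window] at hk
  rw [mem_window]
  omega

lemma DeterminedBy.shiftT_iterate_preimage_window {N n : ℕ} {s : Set Xspace}
    (hs : DeterminedBy (window N) s) : DeterminedBy (window (N + n)) (shiftT^[n] ⁻¹' s) :=
  (hs.shiftT_iterate_preimage n).mono (map_addRight_window_subset N n)

lemma determinedBy_transition (N n : ℕ) (u v : Xspace) :
    DeterminedBy (window (N + n)) (transition N n u v) :=
  ((determinedBy_cyl _ u).mono (window_mono (by omega))).inter
    (determinedBy_cyl _ v).shiftT_iterate_preimage_window

/-- The log-likelihood ratio `log (P (cyl F v) / P (cyl F u))` of two patterns on `F` under the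
coins with log-odds `θ`. -/
def logRatio (θ : ℤ → ℝ) (F : Finset ℤ) (u v : Xspace) : ℝ :=
  ∑ i ∈ F, (logDensity (θ i) (v i) - logDensity (θ i) (u i))

lemma coinMeasure_real_cyl_eq_exp_logRatio_mul (θ : ℤ → ℝ) (F : Finset ℤ) (u v : Xspace) :
    (coinMeasure θ).real (cyl F v) = Real.exp (logRatio θ F u v) * (coinMeasure θ).real (cyl F u) :=
  coinMeasure_real_cyl_eq_exp_mul θ θ F u v

lemma logRatio_swap (θ : ℤ → ℝ) (F : Finset ℤ) (u v : Xspace) :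
    logRatio θ F v u = -logRatio θ F u v := by
  simp only [logRatio, ← Finset.sum_neg_distrib, neg_sub]

lemma logRatio_congr {θ : ℤ → ℝ} {F : Finset ℤ} {u v u' v' : Xspace} (hu : u' ∈ cyl F u)
    (hv : v' ∈ cyl F v) : logRatio θ F u' v' = logRatio θ F u v :=
  Finset.sum_congr rfl fun i hi => by rw [hu i hi, hv i hi]

lemma logRatio_of_mem_transition {θ : ℤ → ℝ} {N n : ℕ} {u v w : Xspace}
    (hw : w ∈ transition N n u v) :
    logRatio θ (window N) w (shiftT^[n] w) = logRatio θ (window N) u v :=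
  logRatio_congr hw.1 hw.2

end Window

section Distortion

lemma sum_sub_shift_le {φ : ℤ → ℝ} (hφ : Monotone φ) {B : ℝ} (h0 : ∀ k, 0 ≤ φ k)
    (hB : ∀ k, φ k ≤ B) (F : Finset ℤ) (n : ℕ) : ∑ k ∈ F, (φ k - φ (k - n)) ≤ n * B := by
  obtain ⟨K, hK⟩ := exists_subset_window F
  have hsub : Finset.Icc (-K : ℤ) K ⊆ Finset.Icc (-K - n : ℤ) (K - n) ∪ Finset.Ioc (K - n : ℤ) K :=
    fun k hk => by simp only [Finset.mem_union, Finset.mem_Icc, Finset.mem_Ioc] at hk ⊢; omega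
  have hshift : ∑ k ∈ Finset.Icc (-K : ℤ) K, φ (k - n) =
      ∑ k ∈ Finset.Icc (-K - n : ℤ) (K - n), φ k :=
    Finset.sum_equiv (Equiv.subRight (n : ℤ)) (fun k => by simp) fun k _ => rfl
  have hlast : ∑ k ∈ Finset.Ioc (K - n : ℤ) K, φ k ≤ n * B := by
    simpa using Finset.sum_le_card_nsmul (Finset.Ioc (K - n : ℤ) K) φ B fun k _ => hB k
  calc ∑ k ∈ F, (φ k - φ (k - n)) ≤ ∑ k ∈ Finset.Icc (-K : ℤ) K, (φ k - φ (k - n)) :=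
        Finset.sum_le_sum_of_subset_of_nonneg hK fun k _ _ => sub_nonneg.2 (hφ (by omega))
    _ = ∑ k ∈ Finset.Icc (-K : ℤ) K, φ k - ∑ k ∈ Finset.Icc (-K - n : ℤ) (K - n), φ k := by
        rw [Finset.sum_sub_distrib, hshift]
    _ ≤ ∑ k ∈ Finset.Ioc (K - n : ℤ) K, φ k := by
        rw [sub_le_iff_le_add']
        refine (Finset.sum_le_sum_of_subset_of_nonneg hsub fun k _ _ => h0 k).trans ?_
        rw [← Finset.sum_union_inter]
        exact le_add_of_nonneg_right (Finset.sum_nonneg fun k _ => h0 k)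
    _ ≤ n * B := hlast

/-- Log-odds that vanish on the nonnegative coordinates and, on the negative ones, are nonnegative
and nonincreasing towards `-∞`. -/
structure IsLeftBias (θ : ℤ → ℝ) : Prop where
  eq_zero : ∀ k, 0 ≤ k → θ k = 0
  nonneg : ∀ k, 0 ≤ θ k
  monotoneOn : MonotoneOn θ (Set.Iio 0)

/-- A bound for `|log (d(P ∘ Tⁿ)/dP) - logRatio|` on a transition between patterns on the window
`[-N, N]`. -/
def distortion (θ : ℤ → ℝ) (N n : ℕ) : ℝ := n * (2 * θ (-(N + 1)))

namespace IsLeftBias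

variable {θ : ℤ → ℝ} (hθ : IsLeftBias θ) {N n : ℕ}

include hθ

lemma le_apply {k : ℤ} (hk : k < -N) : θ k ≤ θ (-(N + 1)) :=
  hθ.monotoneOn (Set.mem_Iio.2 (by omega)) (Set.mem_Iio.2 (by omega)) (by omega)

lemma sum_abs_indicator_sub_shift_le (N n : ℕ) (F : Finset ℤ) :
    ∑ k ∈ F, |(Set.Iio (-N : ℤ)).indicator θ (k - n) - (Set.Iio (-N : ℤ)).indicator θ k| ≤
      distortion θ N n := by
  -- Redefining the truncated log-odds to be `2 * θ (-(N + 1))` on `[-N, ∞)` makes them monotone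
  -- and dominates the jump at `-N`.
  set φ : ℤ → ℝ := fun k => if k < -N then θ k else 2 * θ (-(N + 1)) with hφ
  have hM := hθ.nonneg (-(N + 1))
  have hmono : Monotone φ := fun k l hkl => by
    simp only [hφ]
    split_ifs with hk hl
    · exact hθ.monotoneOn (Set.mem_Iio.2 (by omega)) (Set.mem_Iio.2 (by omega)) hkl
    · linarith [hθ.le_apply hk]
    · omega
    · rfl
  have hφ0 (k : ℤ) : 0 ≤ φ k := by
    simp only [hφ]
    split_ifs
    exacts [hθ.nonneg k, by positivity]
  have hφB (k : ℤ) : φ k ≤ 2 * θ (-(N + 1)) := by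
    simp only [hφ]
    split_ifs with hk
    exacts [by linarith [hθ.le_apply hk], le_rfl]
  refine (Finset.sum_le_sum fun k _ => ?_).trans (sum_sub_shift_le hmono hφ0 hφB F n)
  have hstep := hmono (show k - n ≤ k by omega)
  simp only [hφ, Set.indicator, Set.mem_Iio] at hstep ⊢
  split_ifs at hstep ⊢ with hkn hk
  · rw [abs_sub_comm, abs_of_nonneg (sub_nonneg.2 hstep)]
  · rw [sub_zero, abs_of_nonneg (hθ.nonneg _)]
    linarith [hθ.le_apply hkn]
  · omega
  · simp

lemma logRatio_window_eq_sum {F : Finset ℤ} (hF : window (N + n) ⊆ F) (b : Xspace) :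
    logRatio θ (window N) b (shiftT^[n] b) =
      ∑ k ∈ F, (logDensity ((Set.Iio (-N : ℤ))ᶜ.indicator θ (k - n)) (b k) -
        logDensity ((Set.Iio (-N : ℤ))ᶜ.indicator θ k) (b k)) := by
  set m := (Set.Iio (-N : ℤ))ᶜ.indicator θ
  have eq_zero {k : ℤ} (hk : k ∉ window N) : m k = 0 := by
    rw [mem_window] at hk
    by_cases hkN : k < -N
    · exact Set.indicator_of_notMem (by simpa using hkN) θ
    · exact Set.indicator_apply_eq_zero.2 fun _ => hθ.eq_zero k (by omega)
  have eq_self {k : ℤ} (hk : k ∈ window N) : m k = θ k :=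
    Set.indicator_of_mem (by simpa using (mem_window.1 hk).1) θ
  have sum_unshifted : ∑ k ∈ F, logDensity (m k) (b k) =
      ∑ i ∈ window N, logDensity (θ i) (b i) := by
    rw [← Finset.sum_subset ((window_mono (Nat.le_add_right N n)).trans hF)
      fun k _ hk => by rw [eq_zero hk, logDensity_zero]]
    exact Finset.sum_congr rfl fun i hi => by rw [eq_self hi]
  have sum_shifted : ∑ k ∈ F, logDensity (m (k - n)) (b k) =
      ∑ i ∈ window N, logDensity (θ i) (shiftT^[n] b i) := by
    rw [← Finset.sum_subset ((map_addRight_window_subset N n).trans hF), Finset.sum_map]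
    · exact Finset.sum_congr rfl fun i hi => by simp [eq_self hi, shiftT_iterate_apply]
    · intro k _ hk
      rw [eq_zero, logDensity_zero]
      exact fun hk' => hk (Finset.mem_map.2 ⟨k - n, hk', by simp⟩)
  rw [logRatio, Finset.sum_sub_distrib, Finset.sum_sub_distrib, sum_unshifted, sum_shifted]

lemma abs_sum_logDensity_shift_sub_logRatio_le {F : Finset ℤ} (hF : window (N + n) ⊆ F)
    (b : Xspace) :
    |∑ k ∈ F, (logDensity (θ (k - n)) (b k) - logDensity (θ k) (b k)) -
      logRatio θ (window N) b (shiftT^[n] b)| ≤ distortion θ N n := by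
  set r := (Set.Iio (-N : ℤ)).indicator θ with hr
  set m := (Set.Iio (-N : ℤ))ᶜ.indicator θ with hm
  have split (k : ℤ) (x : Bool) : logDensity (θ k) x = logDensity (r k) x + logDensity (m k) x := by
    by_cases hk : k < -N <;> simp [hr, hm, hk, not_lt.1, logDensity_zero]
  rw [hθ.logRatio_window_eq_sum hF, ← hm, ← Finset.sum_sub_distrib]
  calc _ = |∑ k ∈ F, (logDensity (r (k - n)) (b k) - logDensity (r k) (b k))| := by
        congr 1
        exact Finset.sum_congr rfl fun k _ => by rw [split, split k]; ring
    _ ≤ ∑ k ∈ F, |logDensity (r (k - n)) (b k) - logDensity (r k) (b k)| :=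
        Finset.abs_sum_le_sum_abs _ _
    _ ≤ ∑ k ∈ F, |r (k - n) - r k| := Finset.sum_le_sum fun k _ => abs_logDensity_sub_le _ _ _
    _ ≤ distortion θ N n := hθ.sum_abs_indicator_sub_shift_le N n F

lemma map_shift_real_cyl_mem_Icc {F : Finset ℤ} (hF : window (N + n) ⊆ F) (b : Xspace) :
    ((coinMeasure θ).map shiftInv^[n]).real (cyl F b) ∈
      Set.Icc
        (Real.exp (logRatio θ (window N) b (shiftT^[n] b) - distortion θ N n) *
          (coinMeasure θ).real (cyl F b))
        (Real.exp (logRatio θ (window N) b (shiftT^[n] b) + distortion θ N n) *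
          (coinMeasure θ).real (cyl F b)) := by
  have h := abs_le.1 (hθ.abs_sum_logDensity_shift_sub_logRatio_le hF b)
  rw [map_shiftInv_iterate_coinMeasure,
    coinMeasure_real_cyl_eq_exp_mul θ (fun k => θ (k - n)) F b b]
  constructor <;> gcongr <;> linarith

lemma restrict_map_shift_le {D : Set Xspace} (hD : DeterminedBy (window (N + n)) D) {L : ℝ}
    (hL : ∀ b ∈ D, logRatio θ (window N) b (shiftT^[n] b) ≤ L) :
    ((coinMeasure θ).map shiftInv^[n]).restrict D ≤
      (ENNReal.ofReal (Real.exp (L + distortion θ N n)) • coinMeasure θ).restrict D := by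
  have := Measure.smul_finite (coinMeasure θ)
    (ENNReal.ofReal_ne_top (r := Real.exp (L + distortion θ N n)))
  refine hD.restrict_le_of_cyl_le fun F hF b hb => ?_
  rw [Measure.smul_apply, smul_eq_mul, ← ofReal_measureReal, ← ofReal_measureReal,
    ← ENNReal.ofReal_mul (Real.exp_nonneg _)]
  refine ENNReal.ofReal_le_ofReal ((hθ.map_shift_real_cyl_mem_Icc hF b).2.trans ?_)
  gcongr
  exact hL b hb

lemma le_restrict_map_shift {D : Set Xspace} (hD : DeterminedBy (window (N + n)) D) {L : ℝ}
    (hL : ∀ b ∈ D, L ≤ logRatio θ (window N) b (shiftT^[n] b)) :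
    (ENNReal.ofReal (Real.exp (L - distortion θ N n)) • coinMeasure θ).restrict D ≤
      ((coinMeasure θ).map shiftInv^[n]).restrict D := by
  have := Measure.smul_finite (coinMeasure θ)
    (ENNReal.ofReal_ne_top (r := Real.exp (L - distortion θ N n)))
  refine hD.restrict_le_of_cyl_le fun F hF b hb => ?_
  rw [Measure.smul_apply, smul_eq_mul, ← ofReal_measureReal, ← ofReal_measureReal,
    ← ENNReal.ofReal_mul (Real.exp_nonneg _)]
  refine ENNReal.ofReal_le_ofReal (le_trans ?_ (hθ.map_shift_real_cyl_mem_Icc hF b).1)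
  gcongr
  exact hL b hb

lemma logRatio_window_zero (u v : Xspace) : logRatio θ (window 0) u v = 0 := by
  simp [logRatio, window, hθ.eq_zero 0 le_rfl, logDensity_zero]

lemma map_shift_absolutelyContinuous (n : ℕ) :
    (coinMeasure θ).map shiftInv^[n] ≪ coinMeasure θ := by
  have h := hθ.restrict_map_shift_le (N := 0) (n := n) (L := 0) (fun _ _ _ => rfl)
    fun b (_ : b ∈ Set.univ) => (hθ.logRatio_window_zero _ _).le
  rw [Measure.restrict_univ, Measure.restrict_univ] at h
  exact (Measure.absolutelyContinuous_of_le h).trans Measure.smul_absolutelyContinuous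

lemma absolutelyContinuous_map_shift (n : ℕ) :
    coinMeasure θ ≪ (coinMeasure θ).map shiftInv^[n] := by
  have h := hθ.le_restrict_map_shift (N := 0) (n := n) (L := 0) (fun _ _ _ => rfl)
    fun b (_ : b ∈ Set.univ) => (hθ.logRatio_window_zero _ _).ge
  rw [Measure.restrict_univ, Measure.restrict_univ] at h
  exact (Measure.absolutelyContinuous_smul (by simp [Real.exp_pos])).trans
    (Measure.absolutelyContinuous_of_le h)

lemma shiftNonsingular : ShiftNonsingular (coinMeasure θ) :=
  ⟨hθ.map_shift_absolutelyContinuous 1, hθ.absolutelyContinuous_map_shift 1⟩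

lemma ae_rnD_mem_Icc_of_mem_transition (N n : ℕ) (u v : Xspace) :
    ∀ᵐ w ∂coinMeasure θ, w ∈ transition N n u v →
      (rnD (coinMeasure θ) n w).toReal ∈
        Set.Icc (Real.exp (logRatio θ (window N) u v - distortion θ N n))
          (Real.exp (logRatio θ (window N) u v + distortion θ N n)) := by
  have hD := determinedBy_transition N n u v
  filter_upwards [rnDeriv_le_of_restrict_le hD.measurableSet
      (hθ.restrict_map_shift_le hD fun b hb => (logRatio_of_mem_transition hb).le),
    le_rnDeriv_of_restrict_le (hθ.map_shift_absolutelyContinuous n) hD.measurableSet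
      (hθ.le_restrict_map_shift hD fun b hb => (logRatio_of_mem_transition hb).ge)]
    with w hup hlow hw
  have hfin := (hup hw).trans_lt ENNReal.ofReal_lt_top
  exact ⟨(ENNReal.ofReal_le_iff_le_toReal hfin.ne).1 (hlow hw),
    (ENNReal.le_ofReal_iff_toReal_le hfin.ne (Real.exp_nonneg _)).1 (hup hw)⟩

end IsLeftBias

end Distortion

section Return

lemma coinMeasure_real_inter_shift_preimage (θ : ℤ → ℝ) {M N n : ℕ} (hn : M + N < n)
    {s t : Set Xspace} (hs : DeterminedBy (window M) s) (ht : DeterminedBy (window N) t) :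
    (coinMeasure θ).real (s ∩ shiftT^[n] ⁻¹' t) =
      (coinMeasure θ).real s * (coinMeasure θ).real (shiftT^[n] ⁻¹' t) := by
  refine coinMeasure_real_inter_of_disjoint θ ?_ hs (ht.shiftT_iterate_preimage n)
  refine Finset.disjoint_left.2 fun k hk hk' => ?_
  rw [mem_window] at hk
  rw [mem_map_addRight_window] at hk'
  omega

lemma determinedBy_avoiding_shift {N : ℕ} {s t : Set Xspace} (hs : DeterminedBy (window N) s)
    (ht : DeterminedBy (window N) t) (m j : ℕ) :
    DeterminedBy (window (N + m * j)) (avoiding s (fun i => (shiftT^[m])^[i + 1] ⁻¹' t) j) := by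
  refine (hs.mono (window_mono (by omega))).avoiding fun i hij => ?_
  rw [← Function.iterate_mul]
  exact ht.shiftT_iterate_preimage_window.mono (window_mono (by gcongr; omega))

/-- The sequences looking like `u` on the window `[-N, N]` such that, among its translates by
positive multiples of its length, the first one to show `u` or `v` is the `(j + 1)`-st, showing
`v`. -/
def patternReturn (N : ℕ) (u v : Xspace) (j : ℕ) : Set Xspace :=
  firstReturn shiftT^[2 * N + 1] (cyl (window N) u) (cyl (window N) v) j

lemma patternReturn_subset_transition (N : ℕ) (u v : Xspace) (j : ℕ) :
    patternReturn N u v j ⊆ transition N ((2 * N + 1) * (j + 1)) u v := by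
  rw [transition, Function.iterate_mul]
  exact firstReturn_subset ..

/-- A time within which one of two given patterns on the window `[-N, N]` reappears with probability
at least `1 / 2`: the number of disjoint translates of the window examined, times their length. -/
def returnTime (N : ℕ) : ℕ := (2 * N + 1) * 2 ^ (2 * N)

/-- `A` occupies at least `15 / 16` of `U`. The fraction is chosen so that a set almost filling the
cylinders of two patterns is not avoided by the transitions from one to the other. -/
def AlmostFills {Ω : Type*} [MeasurableSpace Ω] (μ : Measure Ω) (A U : Set Ω) : Prop :=
  μ.real (U \ A) ≤ 1 / 16 * μ.real U

namespace IsLeftBias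

variable {θ : ℤ → ℝ} (hθ : IsLeftBias θ) {N n : ℕ} {u v : Xspace} {i : ℤ}

include hθ

lemma coinMeasure_real_shift_preimage_cyl (hn : N ≤ n) (v : Xspace) :
    (coinMeasure θ).real (shiftT^[n] ⁻¹' cyl (window N) v) = (1 / 2) ^ (2 * N + 1) := by
  rw [shiftT_iterate_preimage_cyl, coinMeasure_real_cyl, ← card_window N,
    ← Finset.card_map (Equiv.addRight (n : ℤ)).toEmbedding]
  refine Finset.prod_eq_pow_card fun k hk => ?_
  rw [mem_map_addRight_window] at hk
  rw [hθ.eq_zero k (by omega), coinMass_zero]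

lemma coinMeasure_real_shift_preimage_union (hn : N ≤ n) (hi : i ∈ window N) (huv : u i ≠ v i) :
    (coinMeasure θ).real (shiftT^[n] ⁻¹' (cyl (window N) u ∪ cyl (window N) v)) =
      (1 / 2) ^ (2 * N) := by
  rw [Set.preimage_union, measureReal_union ((disjoint_cyl hi huv).preimage _)
      ((measurable_shiftT.iterate n) (measurableSet_cyl _ _)),
    hθ.coinMeasure_real_shift_preimage_cyl hn, hθ.coinMeasure_real_shift_preimage_cyl hn]
  ring

lemma coinMeasure_real_cyl_le_sum_patternReturn (hi : i ∈ window N) (huv : u i ≠ v i) :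
    1 / 4 * (coinMeasure θ).real (cyl (window N) u) ≤
      ∑ j ∈ Finset.range (2 ^ (2 * N)), (coinMeasure θ).real (patternReturn N u v j) := by
  set U := cyl (window N) u
  set V := cyl (window N) v
  set E : ℕ → Set Xspace := fun j => (shiftT^[2 * N + 1])^[j + 1] ⁻¹' (U ∪ V)
  have hUV : DeterminedBy (window N) (U ∪ V) := (determinedBy_cyl _ u).union (determinedBy_cyl _ v)
  have indep {t : Set Xspace} (ht : DeterminedBy (window N) t) (j : ℕ) :
      (coinMeasure θ).real (avoiding U E j ∩ (shiftT^[2 * N + 1])^[j + 1] ⁻¹' t) =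
        (coinMeasure θ).real (avoiding U E j) *
          (coinMeasure θ).real (shiftT^[(2 * N + 1) * (j + 1)] ⁻¹' t) := by
    rw [← Function.iterate_mul]
    exact coinMeasure_real_inter_shift_preimage θ (by rw [mul_add]; omega)
      (determinedBy_avoiding_shift (determinedBy_cyl _ u) hUV _ j) ht
  have hsum : (1 / 2 : ℝ) ^ (2 * N + 1) * (coinMeasure θ).real U ≤ 2 * (1 / 2) ^ (2 * N) *
      ∑ j ∈ Finset.range (2 ^ (2 * N)), (coinMeasure θ).real (patternReturn N u v j) :=
    mul_measureReal_le_sum_avoiding_inter (measurableSet_cyl _ u)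
      (fun j => ((measurable_shiftT.iterate _).iterate _) hUV.measurableSet)
      (fun j _ => by rw [indep hUV, hθ.coinMeasure_real_shift_preimage_union (by nlinarith) hi huv])
      (fun j _ => by
        rw [indep (determinedBy_cyl _ v), hθ.coinMeasure_real_shift_preimage_cyl (by nlinarith)])
      (by positivity) (one_sub_half_pow_pow_le _)
  have hpos : (0 : ℝ) < (1 / 2) ^ (2 * N) := by positivity
  refine le_of_mul_le_mul_left ?_ hpos
  rw [pow_succ] at hsum
  linarith

lemma distortion_mono : Monotone (distortion θ N) := fun m n hmn => by
  have := hθ.nonneg (-(N + 1))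
  unfold distortion
  gcongr

lemma mul_coinMeasure_real_le_shift_preimage {X : Set Xspace} (hX : MeasurableSet X)
    (hsub : X ⊆ transition N n u v) :
    Real.exp (logRatio θ (window N) u v - distortion θ N n) * (coinMeasure θ).real X ≤
      (coinMeasure θ).real (shiftInv^[n] ⁻¹' X) := by
  have h := hθ.le_restrict_map_shift (determinedBy_transition N n u v)
    (fun b hb => (logRatio_of_mem_transition hb).ge) X
  rw [Measure.restrict_apply hX, Measure.restrict_apply hX, Set.inter_eq_left.2 hsub,
    Measure.map_apply (measurable_shiftInv.iterate n) hX, Measure.smul_apply, smul_eq_mul,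
    ← ofReal_measureReal, ← ofReal_measureReal, ← ENNReal.ofReal_mul (Real.exp_nonneg _)] at h
  exact (ENNReal.ofReal_le_ofReal_iff measureReal_nonneg).1 h

lemma coinMeasure_real_diff_lt_of_almostFills {A : Set Xspace} (hi : i ∈ window N) (huv : u i ≠ v i)
    (hu : AlmostFills (coinMeasure θ) A (cyl (window N) u))
    (hv : AlmostFills (coinMeasure θ) A (cyl (window N) v)) :
    (coinMeasure θ).real (cyl (window N) v \ A) < Real.exp (logRatio θ (window N) u v - 1) *
      (∑ j ∈ Finset.range (2 ^ (2 * N)), (coinMeasure θ).real (patternReturn N u v j) -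
        (coinMeasure θ).real (cyl (window N) u \ A)) := by
  set L := logRatio θ (window N) u v
  have hsum := hθ.coinMeasure_real_cyl_le_sum_patternReturn hi huv
  have hpos := coinMeasure_real_cyl_pos θ (window N) u
  rw [AlmostFills] at hu hv
  have hexp : Real.exp L = Real.exp (L - 1) * Real.exp 1 := by rw [← Real.exp_add]; ring_nf
  rw [coinMeasure_real_cyl_eq_exp_logRatio_mul θ (window N) u v, hexp, mul_assoc,
    mul_left_comm] at hv
  refine hv.trans_lt (mul_lt_mul_of_pos_left ?_ (Real.exp_pos _))
  nlinarith [Real.exp_one_lt_d9]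

lemma exists_transition_pos (hdist : distortion θ N (returnTime N) ≤ 1) {A : Set Xspace}
    (hA : MeasurableSet A) (hi : i ∈ window N) (huv : u i ≠ v i)
    (hu : AlmostFills (coinMeasure θ) A (cyl (window N) u))
    (hv : AlmostFills (coinMeasure θ) A (cyl (window N) v)) :
    ∃ n ≤ returnTime N,
      0 < coinMeasure θ (A ∩ shiftT^[n] ⁻¹' A ∩ transition N n u v) := by
  have time_le {j : ℕ} (hj : j < 2 ^ (2 * N)) : (2 * N + 1) * (j + 1) ≤ returnTime N :=
    Nat.mul_le_mul_left _ hj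
  obtain ⟨j, hj, hpos⟩ := exists_firstReturn_pos (S' := shiftInv^[2 * N + 1])
    (measurable_shiftT.iterate _) (measurable_shiftInv.iterate _)
    (leftInverse_shiftT_shiftInv.iterate _)
    (fun n => by rw [← Function.iterate_mul]; exact hθ.map_shift_absolutelyContinuous _)
    (measurableSet_cyl _ u) (measurableSet_cyl _ v) hA
    (fun j hj X hX hXm => by
      have hdist_le := (hθ.distortion_mono (time_le hj)).trans hdist
      rw [← Function.iterate_mul]
      refine le_trans ?_ (hθ.mul_coinMeasure_real_le_shift_preimage hXm
        (hX.trans (patternReturn_subset_transition N u v j)))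
      gcongr)
    (Real.exp_nonneg _) (hθ.coinMeasure_real_diff_lt_of_almostFills hi huv hu hv)
  refine ⟨_, time_le hj, hpos.trans_le (measure_mono ?_)⟩
  rw [← Function.iterate_mul]
  exact Set.inter_subset_inter_right _ (patternReturn_subset_transition N u v j)

end IsLeftBias

end Return

section Flip

/-- The sequence obtained from `w` by switching the coordinates in `Γ`. -/
def flipOn {ι : Type*} [DecidableEq ι] (Γ : Finset ι) (w : ι → Bool) : ι → Bool :=
  fun i => if i ∈ Γ then !w i else w i

variable {ι : Type*} [DecidableEq ι] {F Γ : Finset ι}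

lemma flipOn_of_mem {i : ι} (hi : i ∈ Γ) (w : ι → Bool) : flipOn Γ w i = !w i := if_pos hi

lemma flipOn_of_notMem {i : ι} (hi : i ∉ Γ) (w : ι → Bool) : flipOn Γ w i = w i := if_neg hi

lemma measurable_flipOn (Γ : Finset ι) : Measurable (flipOn Γ) :=
  measurable_pi_lambda _ fun i => by
    by_cases hi : i ∈ Γ
    · simp only [flipOn_of_mem hi]
      exact (measurable_of_countable not).comp (measurable_pi_apply i)
    · simp only [flipOn_of_notMem hi]
      exact measurable_pi_apply i

lemma flipOn_preimage_cyl (F Γ : Finset ι) (b : ι → Bool) :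
    flipOn Γ ⁻¹' cyl F b = cyl F (flipOn Γ b) := by
  ext w
  refine forall₂_congr fun i _ => ?_
  by_cases hi : i ∈ Γ
  · rw [flipOn_of_mem hi, flipOn_of_mem hi, Bool.not_eq_eq_eq_not]
  · rw [flipOn_of_notMem hi, flipOn_of_notMem hi]

lemma DeterminedBy.flipOn_preimage_eq {s : Set (ι → Bool)} (hs : DeterminedBy F s)
    (h : Disjoint F Γ) : flipOn Γ ⁻¹' s = s :=
  Set.ext fun _ => hs.mem_iff fun _ hi => flipOn_of_notMem (Finset.disjoint_left.1 h hi) _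

lemma DeterminedBy.exists_cyl_flipOn_lt {s : Set (ι → Bool)} (hs : DeterminedBy F s)
    (μ : Measure (ι → Bool)) [IsFiniteMeasure μ] (A : Set (ι → Bool)) {c : ℝ} (hc : 0 ≤ c)
    (hlt : μ.real (s \ A) + μ.real (flipOn Γ ⁻¹' s \ A) < c * μ.real s) :
    ∃ b ∈ s, μ.real (cyl F b \ A) + μ.real (cyl F (flipOn Γ b) \ A) < c * μ.real (cyl F b) := by
  set ν := μ.restrict Aᶜ + (μ.restrict Aᶜ).map (flipOn Γ) with hν
  have real_apply {t : Set (ι → Bool)} (ht : MeasurableSet t) :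
      ν.real t = μ.real (t \ A) + μ.real (flipOn Γ ⁻¹' t \ A) := by
    rw [hν, measureReal_add_apply, map_measureReal_apply (measurable_flipOn Γ) ht,
      measureReal_restrict_apply ht, measureReal_restrict_apply (measurable_flipOn Γ ht)]
    rfl
  rw [← real_apply hs.measurableSet] at hlt
  simp_rw [← flipOn_preimage_cyl, ← real_apply (measurableSet_cyl F _)]
  contrapose! hlt
  have hle := hs.measure_le_of_cyl_le (μ := ENNReal.ofReal c • μ) (ν := ν) fun b hb => by
    rw [Measure.smul_apply, smul_eq_mul, ← ofReal_measureReal, ← ofReal_measureReal,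
      ← ENNReal.ofReal_mul hc]
    exact ENNReal.ofReal_le_ofReal (hlt b hb)
  rw [Measure.smul_apply, smul_eq_mul, ← ofReal_measureReal, ← ofReal_measureReal,
    ← ENNReal.ofReal_mul hc] at hle
  exact (ENNReal.ofReal_le_ofReal_iff measureReal_nonneg).1 hle

lemma logRatio_flipOn {θ : ℤ → ℝ} {F Γ : Finset ℤ} (hΓ : Γ ⊆ F) {a : ℝ} (ha : ∀ i ∈ Γ, θ i = a)
    {u : Xspace} (hu : ∀ i ∈ Γ, u i = false) :
    logRatio θ F u (flipOn Γ u) = Γ.card * a := by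
  rw [logRatio, ← Finset.sum_subset hΓ fun i _ hi => by rw [flipOn_of_notMem hi, sub_self],
    ← nsmul_eq_mul]
  refine Finset.sum_eq_card_nsmul fun i hi => ?_
  rw [flipOn_of_mem hi, hu i hi, ha i hi, Bool.not_false, logDensity_true_sub_false]

end Flip

section Blocks

/-- The `g`-th block of length `l` to the left of the window `[-N, N]`. -/
def leftBlock (N l g : ℕ) : Finset ℤ := Finset.Ico (-(N + (g + 1) * l)) (-(N + g * l))

lemma card_leftBlock (N l g : ℕ) : (leftBlock N l g).card = l := by
  rw [leftBlock, Int.card_Ico, neg_sub_neg, add_mul, one_mul]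
  simp

lemma leftBlock_subset_Ico {N N' l J g : ℕ} (hg : g < J) (hN : N + J * l ≤ N') :
    leftBlock N l g ⊆ Finset.Ico (-N' : ℤ) (-N) := by
  have hmul := Nat.mul_le_mul_right l (Nat.succ_le_of_lt hg)
  apply Finset.Ico_subset_Ico
  · push_cast [← @Nat.cast_le ℤ] at hmul hN
    linarith
  · nlinarith

lemma leftBlock_subset_window (N l g : ℕ) : leftBlock N l g ⊆ window (N + (g + 1) * l) :=
  fun k hk => by
    have hk := Finset.mem_Ico.1 hk
    rw [mem_window]
    push_cast
    constructor <;> nlinarith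

lemma disjoint_window_leftBlock (N l g : ℕ) : Disjoint (window (N + g * l)) (leftBlock N l g) :=
  Finset.disjoint_left.2 fun k hk hk' => by
    have hk := mem_window.1 hk
    have hk' := Finset.mem_Ico.1 hk'
    push_cast at hk
    omega

/-- The event that the `g`-th block is constantly `b`. -/
def constBlock (N l g : ℕ) (b : Bool) : Set Xspace := cyl (leftBlock N l g) fun _ => b

lemma determinedBy_constBlock (N l g : ℕ) (b : Bool) :
    DeterminedBy (leftBlock N l g) (constBlock N l g b) := determinedBy_cyl _ _

lemma flipOn_preimage_constBlock (N l g : ℕ) (b : Bool) :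
    flipOn (leftBlock N l g) ⁻¹' constBlock N l g b = constBlock N l g (!b) := by
  rw [constBlock, flipOn_preimage_cyl]
  ext w
  exact forall₂_congr fun i hi => by rw [flipOn_of_mem hi]

lemma disjoint_constBlock {l : ℕ} (hl : 0 < l) (N g : ℕ) :
    Disjoint (constBlock N l g false) (constBlock N l g true) := by
  obtain ⟨i, hi⟩ := Finset.card_pos.1 (hl.trans_eq (card_leftBlock N l g).symm)
  exact disjoint_cyl hi Bool.false_ne_true

lemma coinMeasure_real_constBlock {θ : ℤ → ℝ} {N l g : ℕ} {a : ℝ}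
    (ha : ∀ i ∈ leftBlock N l g, θ i = a) (b : Bool) :
    (coinMeasure θ).real (constBlock N l g b) = coinMass a b ^ l := by
  rw [constBlock, coinMeasure_real_cyl, Finset.prod_eq_pow_card (b := coinMass a b)
    fun i hi => by rw [ha i hi], card_leftBlock]

/-- The event that the `g`-th block is constant. -/
def isConstBlock (N l g : ℕ) : Set Xspace := constBlock N l g false ∪ constBlock N l g true

lemma determinedBy_isConstBlock (N l g : ℕ) :
    DeterminedBy (leftBlock N l g) (isConstBlock N l g) :=
  (determinedBy_constBlock N l g false).union (determinedBy_constBlock N l g true)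

lemma coinMeasure_real_isConstBlock {θ : ℤ → ℝ} {N l g : ℕ} (hl : 0 < l) {a : ℝ}
    (ha : ∀ i ∈ leftBlock N l g, θ i = a) :
    (coinMeasure θ).real (isConstBlock N l g) = coinMass a false ^ l * (1 + Real.exp (l * a)) := by
  rw [isConstBlock, measureReal_union (disjoint_constBlock hl N g)
      (determinedBy_constBlock N l g true).measurableSet, coinMeasure_real_constBlock ha,
    coinMeasure_real_constBlock ha, coinMass_true_eq, mul_pow, ← Real.exp_nat_mul]
  ring

lemma half_pow_le_coinMeasure_real_isConstBlock {θ : ℤ → ℝ} {N l g : ℕ} {a : ℝ} (h0 : 0 ≤ a)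
    (ha : ∀ i ∈ leftBlock N l g, θ i = a) :
    (1 / 2) ^ l ≤ (coinMeasure θ).real (isConstBlock N l g) := by
  have half_le : (1 / 2 : ℝ) ≤ coinMass a true := by
    simpa [coinMass] using Real.sigmoid_monotone h0
  calc (1 / 2 : ℝ) ^ l ≤ coinMass a true ^ l := by gcongr
    _ = (coinMeasure θ).real (constBlock N l g true) := (coinMeasure_real_constBlock ha true).symm
    _ ≤ _ := measureReal_mono Set.subset_union_right

/-- The sequences in `C` whose first constant block to the left of `[-N, N]` is the `g`-th one,
which shows only `false`. -/
def firstFalseBlock (N l : ℕ) (C : Set Xspace) (g : ℕ) : Set Xspace :=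
  avoiding C (isConstBlock N l) g ∩ constBlock N l g false

variable {N l : ℕ} {C : Set Xspace}

lemma determinedBy_avoiding_isConstBlock (hC : DeterminedBy (window N) C) (g : ℕ) :
    DeterminedBy (window (N + g * l))
      (avoiding C (isConstBlock N l) g) := by
  refine (hC.mono (window_mono (Nat.le_add_right _ _))).avoiding fun h hh => ?_
  exact (determinedBy_isConstBlock N l h).mono
    ((leftBlock_subset_window N l h).trans (window_mono (by gcongr; omega)))

lemma determinedBy_firstFalseBlock (hC : DeterminedBy (window N) C) (g : ℕ) :
    DeterminedBy (window (N + (g + 1) * l)) (firstFalseBlock N l C g) :=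
  ((determinedBy_avoiding_isConstBlock hC g).mono (window_mono (by gcongr; omega))).inter
    ((determinedBy_constBlock N l g false).mono (leftBlock_subset_window N l g))

lemma flipOn_preimage_firstFalseBlock (hC : DeterminedBy (window N) C) (g : ℕ) :
    flipOn (leftBlock N l g) ⁻¹' firstFalseBlock N l C g =
      avoiding C (isConstBlock N l) g ∩
        constBlock N l g true := by
  rw [firstFalseBlock, Set.preimage_inter, flipOn_preimage_constBlock, Bool.not_false,
    (determinedBy_avoiding_isConstBlock hC g).flipOn_preimage_eq (disjoint_window_leftBlock N l g)]

lemma sum_firstFalseBlock_diff_le (hC : DeterminedBy (window N) C) (hl : 0 < l)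
    (μ : Measure Xspace) [IsFiniteMeasure μ] {A : Set Xspace} (hA : MeasurableSet A) (J : ℕ) :
    ∑ g ∈ Finset.range J, (μ.real (firstFalseBlock N l C g \ A) +
      μ.real (flipOn (leftBlock N l g) ⁻¹' firstFalseBlock N l C g \ A)) ≤ μ.real (C \ A) := by
  have havoid (g : ℕ) : MeasurableSet (avoiding C (isConstBlock N l) g) :=
    (determinedBy_avoiding_isConstBlock hC g).measurableSet
  have add_eq (g : ℕ) : μ.real (firstFalseBlock N l C g \ A) +
      μ.real (flipOn (leftBlock N l g) ⁻¹' firstFalseBlock N l C g \ A) =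
        μ.real ((avoiding C (isConstBlock N l) g ∩ isConstBlock N l g) \ A) := by
    rw [flipOn_preimage_firstFalseBlock hC, firstFalseBlock, ← measureReal_union,
      ← Set.union_sdiff_distrib, ← Set.inter_union_distrib_left, isConstBlock]
    · exact ((disjoint_constBlock hl N g).mono Set.inter_subset_right Set.inter_subset_right).mono
        Set.sdiff_subset Set.sdiff_subset
    · exact ((havoid g).inter (determinedBy_constBlock N l g true).measurableSet).diff hA
  simp only [add_eq]
  rw [← measureReal_biUnion_finset
    (fun g _ h _ hgh => (pairwise_disjoint_avoiding_inter C _ hgh).mono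
      Set.sdiff_subset Set.sdiff_subset)
    fun g _ => ((havoid g).inter (determinedBy_isConstBlock N l g).measurableSet).diff hA]
  refine measureReal_mono (Set.iUnion₂_subset fun g _ => Set.sdiff_subset_sdiff_left ?_)
  exact Set.inter_subset_left.trans Set.sdiff_subset

variable {θ : ℤ → ℝ} {a : ℝ}

lemma coinMeasure_real_le_sum_firstFalseBlock (hC : DeterminedBy (window N) C) (hl : 0 < l)
    (ha : 0 ≤ a) (hθ : ∀ g < 2 ^ l, ∀ i ∈ leftBlock N l g, θ i = a) :
    (coinMeasure θ).real C ≤ 2 * (1 + Real.exp (l * a)) *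
      ∑ g ∈ Finset.range (2 ^ l), (coinMeasure θ).real (firstFalseBlock N l C g) := by
  have hr : 0 < coinMass a false ^ l := pow_pos (coinMass_pos a false) l
  have indep (g : ℕ) {t : Set Xspace} (ht : DeterminedBy (leftBlock N l g) t) :=
    coinMeasure_real_inter_of_disjoint θ (disjoint_window_leftBlock N l g)
      (determinedBy_avoiding_isConstBlock hC g) ht
  have hit {g : ℕ} (hg : g < 2 ^ l) := coinMeasure_real_isConstBlock hl (hθ g hg)
  have miss_pow : (1 - coinMass a false ^ l * (1 + Real.exp (l * a))) ^ 2 ^ l ≤ 1 / 2 := by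
    have hpos : 0 < 2 ^ l := by positivity
    rw [← hit hpos]
    refine le_trans (pow_le_pow_left₀ (sub_nonneg.2 measureReal_le_one) ?_ _)
      (one_sub_half_pow_pow_le l)
    linarith [half_pow_le_coinMeasure_real_isConstBlock ha (hθ 0 hpos)]
  have hsum := mul_measureReal_le_sum_avoiding_inter (μ := coinMeasure θ) hC.measurableSet
    (fun g => (determinedBy_isConstBlock N l g).measurableSet)
    (fun g hg => by rw [indep g (determinedBy_isConstBlock N l g), hit hg])
    (fun g hg => by
      rw [indep g (determinedBy_constBlock N l g false), coinMeasure_real_constBlock (hθ g hg)])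
    hr.le miss_pow
  refine le_of_mul_le_mul_left (hsum.trans_eq ?_) hr
  simp only [firstFalseBlock]
  ring

lemma exists_flipOn_pair {N' : ℕ} (hC : DeterminedBy (window N) C) (hl : 0 < l)
    (ha : 0 ≤ a) (hN : N + 2 ^ l * l ≤ N') (hθ : ∀ i ∈ Finset.Ico (-N' : ℤ) (-N), θ i = a)
    {A : Set Xspace} (hA : MeasurableSet A) {δ : ℝ} (hδ : 0 ≤ δ)
    (hCA : (coinMeasure θ).real (C \ A) < δ * (coinMeasure θ).real C) :
    ∃ u v, (∃ i ∈ window N', u i ≠ v i) ∧ logRatio θ (window N') u v = l * a ∧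
      (coinMeasure θ).real (cyl (window N') u \ A) + (coinMeasure θ).real (cyl (window N') v \ A) <
        δ * (2 * (1 + Real.exp (l * a))) * (coinMeasure θ).real (cyl (window N') u) := by
  set c := δ * (2 * (1 + Real.exp (l * a))) with hc
  have hθg (g : ℕ) (hg : g < 2 ^ l) (i : ℤ) (hi : i ∈ leftBlock N l g) : θ i = a :=
    hθ i (leftBlock_subset_Ico hg hN hi)
  obtain ⟨g, hg, hlt⟩ : ∃ g ∈ Finset.range (2 ^ l),
      (coinMeasure θ).real (firstFalseBlock N l C g \ A) +
        (coinMeasure θ).real (flipOn (leftBlock N l g) ⁻¹' firstFalseBlock N l C g \ A) <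
      c * (coinMeasure θ).real (firstFalseBlock N l C g) := by
    refine Finset.exists_lt_of_sum_lt ?_
    rw [← Finset.mul_sum, hc, mul_assoc]
    exact (sum_firstFalseBlock_diff_le hC hl _ hA _).trans_lt (hCA.trans_le
      (mul_le_mul_of_nonneg_left (coinMeasure_real_le_sum_firstFalseBlock hC hl ha hθg) hδ))
  have hg := Finset.mem_range.1 hg
  have hwindow : window (N + (g + 1) * l) ⊆ window N' :=
    window_mono (le_trans (by gcongr; exact hg) hN)
  have hΓ := (leftBlock_subset_window N l g).trans hwindow
  obtain ⟨u, hu, hlt⟩ := ((determinedBy_firstFalseBlock hC g).mono hwindow).exists_cyl_flipOn_lt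
    (coinMeasure θ) A (by positivity) hlt
  obtain ⟨i, hi⟩ := Finset.card_pos.1 (hl.trans_eq (card_leftBlock N l g).symm)
  refine ⟨u, flipOn (leftBlock N l g) u, ⟨i, hΓ hi, ?_⟩, ?_, hlt⟩
  · simp [flipOn_of_mem hi]
  · rw [logRatio_flipOn hΓ (hθg g hg) hu.2, card_leftBlock]

end Blocks

section RatioSet

/-- Arbitrarily far to the left, `θ` is constant along stretches that are long enough to contain
`2 ^ l` blocks of length `l` each of which contributes nearly `s` to the log-likelihood, and beyond
which `θ` is so small that it does not disturb the returns of a pattern to its window. -/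
def HasLongBlocks (θ : ℤ → ℝ) : Prop :=
  ∀ s η : ℝ, 0 ≤ s → 0 < η → ∀ K : ℕ, ∃ N N' l : ℕ, ∃ a : ℝ,
    K ≤ N ∧ N + 2 ^ l * l ≤ N' ∧ 0 < l ∧ 0 ≤ a ∧ (∀ i ∈ Finset.Ico (-N' : ℤ) (-N), θ i = a) ∧
      |l * a - s| ≤ η ∧ distortion θ N' (returnTime N') ≤ η

/-- The patterns `u` and `v` on the window `[-N, N]` differ, `A` almost fills both of their
cylinders, and passing from one to the other multiplies the likelihood by nearly `exp s`. -/
structure IsGoodPair (θ : ℤ → ℝ) (A : Set Xspace) (s η : ℝ) (N : ℕ) (u v : Xspace) : Prop where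
  exists_ne : ∃ i ∈ window N, u i ≠ v i
  abs_logRatio_sub_le : |logRatio θ (window N) u v - s| ≤ η
  left_fills : AlmostFills (coinMeasure θ) A (cyl (window N) u)
  right_fills : AlmostFills (coinMeasure θ) A (cyl (window N) v)

variable {θ : ℤ → ℝ} {A : Set Xspace} {s η : ℝ}

lemma IsGoodPair.symm {N : ℕ} {u v : Xspace} (h : IsGoodPair θ A s η N u v) :
    IsGoodPair θ A (-s) η N v u where
  exists_ne := h.exists_ne.imp fun _ hi => ⟨hi.1, hi.2.symm⟩
  abs_logRatio_sub_le := by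
    rw [logRatio_swap, neg_sub_neg, abs_sub_comm]
    exact h.abs_logRatio_sub_le
  left_fills := h.right_fills
  right_fills := h.left_fills

lemma HasLongBlocks.exists_isGoodPair_of_nonneg (hθ : HasLongBlocks θ) (hA : MeasurableSet A)
    (hpos : 0 < coinMeasure θ A) (hs : 0 ≤ s) (hη : 0 < η) (hη1 : η ≤ 1) :
    ∃ N u v, IsGoodPair θ A s η N u v ∧ distortion θ N (returnTime N) ≤ η := by
  set P := coinMeasure θ
  set δ := 1 / (32 * (1 + Real.exp (s + 1))) with hδ
  have hδ0 : 0 < δ := by positivity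
  obtain ⟨F, C, hC, hCA⟩ := exists_determinedBy_diff_lt P hA hpos hδ0
  obtain ⟨K, hK⟩ := exists_subset_window F
  obtain ⟨N, N', l, a, hKN, hNN', hl, ha, hblock, hla, hdist⟩ := hθ s η hs hη K
  obtain ⟨u, v, hne, hratio, hlt⟩ := exists_flipOn_pair (hC.mono (hK.trans (window_mono hKN))) hl
    ha hNN' hblock hA hδ0.le hCA
  have hsmall : δ * (2 * (1 + Real.exp (l * a))) ≤ 1 / 16 := by
    have hexp : Real.exp (l * a) ≤ Real.exp (s + 1) :=
      Real.exp_le_exp.2 (by linarith [(abs_le.1 hla).2])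
    rw [hδ, div_mul_eq_mul_div, one_mul, div_le_iff₀ (by positivity)]
    linarith
  have hbad := hlt.le.trans (mul_le_mul_of_nonneg_right hsmall measureReal_nonneg)
  have huv : P.real (cyl (window N') u) ≤ P.real (cyl (window N') v) := by
    rw [coinMeasure_real_cyl_eq_exp_logRatio_mul θ (window N') u v, hratio]
    exact le_mul_of_one_le_left measureReal_nonneg (Real.one_le_exp (by positivity))
  have hu0 : 0 ≤ P.real (cyl (window N') u \ A) := measureReal_nonneg
  have hv0 : 0 ≤ P.real (cyl (window N') v \ A) := measureReal_nonneg
  refine ⟨N', u, v, ⟨hne, by rwa [hratio], ?_, ?_⟩, hdist⟩ <;> rw [AlmostFills] <;> linarith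

lemma HasLongBlocks.exists_isGoodPair (hθ : HasLongBlocks θ) (hA : MeasurableSet A)
    (hpos : 0 < coinMeasure θ A) (s : ℝ) (hη : 0 < η) (hη1 : η ≤ 1) :
    ∃ N u v, IsGoodPair θ A s η N u v ∧ distortion θ N (returnTime N) ≤ η := by
  rcases le_total 0 s with hs | hs
  · exact hθ.exists_isGoodPair_of_nonneg hA hpos hs hη hη1
  · obtain ⟨N, u, v, hpair, hdist⟩ :=
      hθ.exists_isGoodPair_of_nonneg hA hpos (neg_nonneg.2 hs) hη hη1
    exact ⟨N, v, u, neg_neg s ▸ hpair.symm, hdist⟩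

lemma IsLeftBias.mem_ratioSet (hθ : IsLeftBias θ) (hblocks : HasLongBlocks θ) {lam : ℝ}
    (hlam : 0 < lam) : lam ∈ ratioSet (coinMeasure θ) := by
  refine ⟨hlam.le, fun A hA hpos ε hε => ?_⟩
  set s := Real.log lam
  obtain ⟨d, hd, hexp⟩ := Metric.continuous_iff.1 Real.continuous_exp s ε hε
  have exp_near {x : ℝ} (hx : |x - s| < d) : |Real.exp x - lam| < ε :=
    Real.exp_log hlam ▸ hexp x hx
  set η := min 1 (d / 3)
  have hηd : η ≤ d / 3 := min_le_right _ _
  obtain ⟨N, u, v, hpair, hdist⟩ :=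
    hblocks.exists_isGoodPair hA hpos s (η := η) (by positivity) (min_le_left _ _)
  obtain ⟨i, hi, huv⟩ := hpair.exists_ne
  obtain ⟨n, hn, hn_pos⟩ := hθ.exists_transition_pos (hdist.trans (min_le_left _ _)) hA hi huv
    hpair.left_fills hpair.right_fills
  refine ⟨n, hn_pos.trans_le (measure_mono_ae ?_)⟩
  filter_upwards [hθ.ae_rnD_mem_Icc_of_mem_transition N n u v] with w hw hmem
  refine ⟨hmem.1, ?_⟩
  obtain ⟨hlow, hup⟩ := hw hmem.2
  have hL := abs_le.1 hpair.abs_logRatio_sub_le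
  have hdist_n := (hθ.distortion_mono hn).trans hdist
  have hdist_nonneg : 0 ≤ distortion θ N n :=
    mul_nonneg n.cast_nonneg (mul_nonneg zero_le_two (hθ.nonneg _))
  have near_low := abs_lt.1 (exp_near (x := logRatio θ (window N) u v - distortion θ N n)
    (abs_lt.2 ⟨by linarith, by linarith⟩))
  have near_up := abs_lt.1 (exp_near (x := logRatio θ (window N) u v + distortion θ N n)
    (abs_lt.2 ⟨by linarith, by linarith⟩))
  change |(rnD (coinMeasure θ) n w).toReal - lam| ≤ ε
  exact abs_le.2 ⟨by linarith, by linarith⟩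

end RatioSet

section Parameters

/-- The value of the log-odds to the left of `-n`, if a stage of the construction ends there. -/
def level (n : ℕ) : ℝ := (1 / 2) ^ (4 * n + 4)

/-- The largest block length that the stage following `n` has room for; the log-likelihood
contributed by such a block is `maxBlock n * level n = n`. -/
def maxBlock (n : ℕ) : ℕ := n * 2 ^ (4 * n + 4)

/-- The stages of the construction end at the coordinates `-stageEnd t`. -/
def stageEnd : ℕ → ℕ
  | 0 => 1
  | t + 1 => stageEnd t + 2 ^ maxBlock (stageEnd t) * maxBlock (stageEnd t)

/-- The last stage ending to the right of the coordinate `-m`. -/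
def stageOf (m : ℕ) : ℕ := Nat.findGreatest (fun t => stageEnd t < m) m

/-- The log-odds of the construction: `level (stageEnd t)` on
`[-stageEnd (t + 1), -stageEnd t)`, continued by its first value to `-1`, and `0` on the
nonnegative coordinates. -/
def bias (k : ℤ) : ℝ := if k < 0 then level (stageEnd (stageOf (-k).toNat)) else 0

lemma level_pos (n : ℕ) : 0 < level n := by unfold level; positivity

lemma level_anti : Antitone level := fun m n h =>
  pow_le_pow_of_le_one (by norm_num) (by norm_num) (by omega)

lemma level_lt_one (n : ℕ) : level n < 1 :=
  pow_lt_one₀ (by norm_num) (by norm_num) (by omega)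

lemma level_le_half_pow (n : ℕ) : level n ≤ (1 / 2) ^ n :=
  pow_le_pow_of_le_one (by norm_num) (by norm_num) (by omega)

lemma maxBlock_mul_level (n : ℕ) : maxBlock n * level n = n := by
  rw [maxBlock, level, Nat.cast_mul, Nat.cast_pow, mul_assoc, ← mul_pow]
  norm_num

lemma stageEnd_pos : ∀ t, 0 < stageEnd t
  | 0 => one_pos
  | t + 1 => Nat.add_pos_left (stageEnd_pos t) _

lemma stageEnd_strictMono : StrictMono stageEnd := strictMono_nat_of_lt_succ fun t => by
  have h := stageEnd_pos t
  have hpos : 0 < 2 ^ maxBlock (stageEnd t) * maxBlock (stageEnd t) := by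
    unfold maxBlock
    positivity
  exact Nat.lt_add_of_pos_right hpos

lemma le_stageEnd (t : ℕ) : t ≤ stageEnd t := stageEnd_strictMono.le_apply

lemma stageOf_mono : Monotone stageOf := fun _ _ h =>
  Nat.findGreatest_mono (fun _ ht => lt_of_lt_of_le ht h) h

lemma stageOf_eq {t m : ℕ} (h : stageEnd t < m) (h' : m ≤ stageEnd (t + 1)) : stageOf m = t := by
  rw [stageOf, Nat.findGreatest_eq_iff]
  refine ⟨(le_stageEnd t).trans h.le, fun _ => h, fun n hn _ => ?_⟩
  exact not_lt.2 (h'.trans (stageEnd_strictMono.monotone hn))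

lemma bias_eq_level {t : ℕ} {k : ℤ} (h : -(stageEnd (t + 1) : ℤ) ≤ k) (h' : k < -stageEnd t) :
    bias k = level (stageEnd t) := by
  rw [bias, if_pos (by omega), stageOf_eq (t := t)] <;> omega

lemma isLeftBias_bias : IsLeftBias bias where
  eq_zero k hk := if_neg (not_lt.2 hk)
  nonneg k := by
    unfold bias
    split_ifs
    exacts [(level_pos _).le, le_rfl]
  monotoneOn k hk m hm hkm := by
    rw [Set.mem_Iio] at hk hm
    rw [bias, bias, if_pos hk, if_pos hm]
    exact level_anti (stageEnd_strictMono.monotone (stageOf_mono (by omega)))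

lemma bias_lt_one (k : ℤ) : bias k < 1 := by
  unfold bias
  split_ifs
  exacts [level_lt_one _, one_pos]

lemma returnTime_mul_level_le (n : ℕ) : returnTime n * (2 * level n) ≤ (1 / 2) ^ n := by
  have hlen : ((2 * n + 1 : ℕ) : ℝ) ≤ 2 ^ (n + 1) := by
    have := n.lt_two_pow_self
    exact_mod_cast (by rw [pow_succ]; omega : 2 * n + 1 ≤ 2 ^ (n + 1))
  calc (returnTime n : ℝ) * (2 * level n)
      ≤ 2 ^ (n + 1) * 2 ^ (2 * n) * (2 * level n) := by
        have := level_pos n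
        rw [returnTime, Nat.cast_mul, Nat.cast_pow, Nat.cast_ofNat]
        gcongr
    _ = (1 / 2) ^ (n + 2) := by
        rw [level, one_div, inv_pow, inv_pow]
        field_simp
        ring
    _ ≤ (1 / 2) ^ n := pow_le_pow_of_le_one (by norm_num) (by norm_num) (by omega)

lemma distortion_bias_le (t : ℕ) :
    distortion bias (stageEnd t) (returnTime (stageEnd t)) ≤ (1 / 2) ^ t := by
  have hstep : stageEnd t < stageEnd (t + 1) := stageEnd_strictMono t.lt_succ_self
  rw [distortion, bias_eq_level (t := t) (by omega) (by omega)]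
  exact (returnTime_mul_level_le _).trans
    (pow_le_pow_of_le_one (by norm_num) (by norm_num) (le_stageEnd t))

lemma exists_nat_mul_mem_Icc {s a : ℝ} (hs : 0 ≤ s) (ha : 0 < a) :
    ∃ l : ℕ, 0 < l ∧ l * a ∈ Set.Icc s (s + a) := by
  refine ⟨⌊s / a⌋₊ + 1, Nat.succ_pos _, ?_, ?_⟩
  · exact_mod_cast ((div_lt_iff₀ ha).1 (Nat.lt_floor_add_one (s / a))).le
  · have := (le_div_iff₀ ha).1 (Nat.floor_le (div_nonneg hs ha.le))
    push_cast
    linarith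

lemma hasLongBlocks_bias : HasLongBlocks bias := by
  intro s η hs hη K
  obtain ⟨t₀, ht₀⟩ := exists_pow_lt_of_lt_one hη (by norm_num : (1 / 2 : ℝ) < 1)
  obtain ⟨t₁, ht₁⟩ := exists_nat_ge (s + 1)
  set t := max t₀ (max t₁ K)
  set N := stageEnd t with hN
  have htN : t ≤ N := le_stageEnd t
  have half_pow_le {n : ℕ} (hn : t ≤ n) : (1 / 2 : ℝ) ^ n ≤ η :=
    (pow_le_pow_of_le_one (by norm_num) (by norm_num) (by omega)).trans ht₀.le
  have hsN : s + 1 ≤ N := ht₁.trans (by exact_mod_cast (by omega : t₁ ≤ N))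
  obtain ⟨l, hl, hl_low, hl_up⟩ := exists_nat_mul_mem_Icc hs (level_pos N)
  have hl_max : l ≤ maxBlock N := by
    have h : l * level N ≤ maxBlock N * level N := by
      rw [maxBlock_mul_level]
      linarith [level_lt_one N]
    exact_mod_cast le_of_mul_le_mul_right h (level_pos N)
  refine ⟨N, stageEnd (t + 1), l, level N, by omega, ?_, hl, (level_pos N).le, fun i hi => ?_, ?_,
    (distortion_bias_le (t + 1)).trans (half_pow_le (by omega))⟩
  · rw [stageEnd, ← hN]
    gcongr
    norm_num
  · exact bias_eq_level (Finset.mem_Ico.1 hi).1 (Finset.mem_Ico.1 hi).2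
  · rw [abs_of_nonneg (by linarith)]
    linarith [(level_le_half_pow N).trans (half_pow_le htN)]

end Parameters

/-- there is a product measure `P` on `{0,1}^ℤ` with coordinate probabilities
in `(1/(1+e), e/(1+e))` under which the shift is nonsingular, every `λ > 0` belongs to the
ratio set, and there is no equivalent σ-finite shift-invariant measure. -/
theorem exists_typeIII₁_product_measure :
    ∃ (q : ℤ → ℝ) (P : Measure Xspace),
      (∀ k : ℤ, 1 / (1 + Real.exp 1) < q k ∧ q k < Real.exp 1 / (1 + Real.exp 1)) ∧
      IsProductMeasure q P ∧
      ShiftNonsingular P ∧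
      (∀ lam : ℝ, 0 < lam → lam ∈ ratioSet P) ∧
      ¬ ∃ μ : Measure Xspace, SigmaFinite μ ∧ μ ≪ P ∧ P ≪ μ ∧
          Measure.map shiftInv μ = μ := by
  have mem_ratioSet (lam : ℝ) (hlam : 0 < lam) : lam ∈ ratioSet (coinMeasure bias) :=
    isLeftBias_bias.mem_ratioSet hasLongBlocks_bias hlam
  have bias_mem_Ioo (k : ℤ) : bias k ∈ Set.Ioo (-1) 1 :=
    ⟨neg_one_lt_zero.trans_le (isLeftBias_bias.nonneg k), bias_lt_one k⟩
  exact ⟨fun k => Real.sigmoid (bias k), coinMeasure bias,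
    fun k => sigmoid_mem_Ioo (bias_mem_Ioo k), isProductMeasure_coinMeasure bias,
    isLeftBias_bias.shiftNonsingular, mem_ratioSet,
    not_exists_invariant_of_mem_ratioSet one_lt_two (mem_ratioSet 2 two_pos)⟩
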